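/- Let λ ∈ (1/2, 1) be an algebraic number with Mahler measure M_λ. Suppose that λ is not a root of any nonzero polynomial with coefficients in {−1, 0, 1}, and that (log M_λ − log 2)·(log M_λ)² < (1/27)·(log M_λ − log λ⁻¹)³·λ⁴. Then the Bernoulli convolution μ_λ is absolutely continuous with respect to Lebesgue measure on ℝ. -/

import Mathlib

open MeasureTheory Real

/-- The Bernoulli convolution with parameter `λ`: the law of `∑ₙ Xₙ λⁿ` with `Xₙ` i.i.d.
uniform on `{±1}`, realized by extracting the (i.i.d. fair) binary digits of a
uniform point of `[0,1)`. -/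
noncomputable def bernoulliConv (lam : ℝ) : Measure ℝ :=
  Measure.map
    (fun x => ∑' n : ℕ, (if ⌊x * 2 ^ (n + 1)⌋ % 2 = 1 then (1 : ℝ) else -1) * lam ^ n)
    (volume.restrict (Set.Ico (0 : ℝ) 1))

/-- The Mahler measure of an algebraic number with minimal polynomial `P` over `ℤ`:
`|leading coefficient| · ∏ max (|root|, 1)` over the complex roots of `P`. -/
noncomputable def mahlerMeasure (P : Polynomial ℤ) : ℝ :=
  |(P.leadingCoeff : ℝ)| * ((P.aroots ℂ).map fun z => max ‖z‖ 1).prod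

/-!
Write `ℓ = log λ⁻¹` and `L = log M`. Since `λ` is not a root of a polynomial of height one, the
`2 ^ m` digit sums `∑ n < m, ±λ ^ n` are separated at scale `M ^ (-m)`, up to a factor polynomial
in `m`. Hence the differential entropy of the digit sum smoothed by a Gaussian grows by at most
`m (L - log 2 + o(1))` as the variance increases from `M ^ (-2 m) = λ ^ (2 κ m)`, `κ = L / ℓ`,
to `1`. A Pinsker type inequality bounds `‖f'‖₁ ^ 2`, for a smoothed density `f`, by the rate of
this growth, so some variance `y = λ ^ (2 u)` with `β m ≤ u ≤ κ m` satisfies `y ‖f'‖₁ ^ 2 ≤ δ`.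

The Fourier transform `φ` of the Bernoulli convolution is a product of cosines, so disjoint blocks
of digits contribute separate factors, and rescaling by a power of `λ` makes `2 k` blocks of
lengths growing like `q ^ i` gain a derivative each at one common variance `y / (2 k)`. Because a
derivative in the variance is two derivatives in space, the `k`-th derivative in `y` of the heat
regularization `exp (-y ξ ^ 2 / 2) φ ξ` is bounded, as a Fourier multiplier for the sup norm, by
`(k δ / y) ^ k`. The blocks fit when `log y⁻¹` is at least of order `q ^ (2 k)`, and if
`e δ q ^ 2 < 1`, integrating back `k` times on each range of scales gives summable increments. So
the heat regularizations converge in total variation as `y → 0`, and their limit is absolutely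
continuous.
-/

open InformationTheory ProbabilityTheory

section PointwisePinsker

/-- Sharper than `(t - 1) ^ 2 / 2` near `t = ∞`, which lets the Pinsker inequality below be
pointwise. -/
lemma three_mul_sq_div_le_klFun {t : ℝ} (ht : 0 < t) :
    3 * (t - 1) ^ 2 / (2 * (t + 2)) ≤ klFun t := by
  set f : ℝ → ℝ := fun t ↦ klFun t - 3 / 2 * (t - 4 + 9 / (t + 2)) with hf
  have hf' : ∀ x ∈ Set.Ioi (0 : ℝ),
      HasDerivAt f (log x - 3 / 2 * (1 - 9 / (x + 2) ^ 2)) x := fun x (hx : 0 < x) ↦ by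
    have hinv : HasDerivAt (fun x : ℝ ↦ 9 / (x + 2)) (-9 / (x + 2) ^ 2) x := by
      simpa using (hasDerivAt_const x (9 : ℝ)).fun_div ((hasDerivAt_id' x).add_const 2)
        (by positivity)
    refine ((hasDerivAt_klFun hx.ne').sub
      ((((hasDerivAt_id' x).sub_const 4).add hinv).const_mul (3 / 2))).congr_deriv ?_
    ring
  have hf'' : ∀ x ∈ Set.Ioi (0 : ℝ),
      HasDerivAt (fun x ↦ log x - 3 / 2 * (1 - 9 / (x + 2) ^ 2)) (x⁻¹ - 27 / (x + 2) ^ 3) x :=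
    fun x (hx : 0 < x) ↦ by
    have hinv : HasDerivAt (fun x : ℝ ↦ 9 / (x + 2) ^ 2) (-18 / (x + 2) ^ 3) x := by
      refine ((hasDerivAt_const x (9 : ℝ)).fun_div (((hasDerivAt_id' x).add_const 2).fun_pow 2)
        (by positivity)).congr_deriv ?_
      have : x + 2 ≠ 0 := by positivity
      field_simp
      ring
    refine ((Real.hasDerivAt_log hx.ne').sub
      ((hinv.const_sub 1).const_mul (3 / 2))).congr_deriv ?_
    ring
  have hconvex : ConvexOn ℝ (Set.Ioi 0) f := by
    refine convexOn_of_hasDerivWithinAt2_nonneg (convex_Ioi 0)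
      (fun x hx ↦ (hf' x hx).continuousAt.continuousWithinAt)
      (fun x hx ↦ (hf' x (interior_subset hx)).hasDerivWithinAt)
      (fun x hx ↦ (hf'' x (interior_subset hx)).hasDerivWithinAt) fun x hx ↦ ?_
    have hx : 0 < x := interior_subset hx
    rw [sub_nonneg, inv_eq_one_div, div_le_div_iff₀ (by positivity) hx]
    nlinarith [mul_nonneg (sq_nonneg (x - 1)) (by linarith : 0 ≤ x + 8)]
  have hmin : IsMinOn f (Set.Ioi 0) 1 := by
    refine hconvex.isMinOn_of_rightDeriv_eq_zero (by simp) ?_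
    rw [((hf' 1 (Set.mem_Ioi.2 one_pos)).hasDerivWithinAt).derivWithin (uniqueDiffWithinAt_Ioi 1)]
    norm_num
  have hle : f 1 ≤ f t := hmin ht
  have hfrac : 3 * (t - 1) ^ 2 / (2 * (t + 2)) = 3 / 2 * (t - 4 + 9 / (t + 2)) := by
    field_simp
    ring
  simp only [hf, klFun_one] at hle
  norm_num at hle
  linarith

lemma mul_klFun_div {a b : ℝ} (ha : 0 < a) (hb : 0 < b) :
    b * klFun (a / b) = a * log a - a * log b + b - a := by
  rw [klFun_apply, log_div ha.ne' hb.ne']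
  field_simp

lemma mul_klFun_div_nonneg {a b : ℝ} (ha : 0 < a) (hb : 0 < b) : 0 ≤ b * klFun (a / b) :=
  mul_nonneg hb.le (klFun_nonneg (by positivity))

lemma sq_sub_le_mul_klFun {a b : ℝ} (ha : 0 < a) (hb : 0 < b) :
    (a - b) ^ 2 ≤ 2 / 3 * (a + 2 * b) * (b * klFun (a / b)) := by
  have h := three_mul_sq_div_le_klFun (div_pos ha hb)
  calc (a - b) ^ 2 = 2 / 3 * (a + 2 * b) * b * (3 * (a / b - 1) ^ 2 / (2 * (a / b + 2))) := by
        field_simp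
    _ ≤ 2 / 3 * (a + 2 * b) * b * klFun (a / b) := by gcongr
    _ = _ := by ring

lemma two_mul_abs_mul_abs_sub_le {a b : ℝ} (ha : 0 < a) (hb : 0 < b) (u : ℝ) :
    2 * |u| * |a - b| ≤ 2 / 3 * u ^ 2 * (a + 2 * b) + b * klFun (a / b) := by
  have hk := mul_klFun_div_nonneg ha hb
  have hsq : (2 * |u| * |a - b|) ^ 2 ≤ (2 / 3 * u ^ 2 * (a + 2 * b) + b * klFun (a / b)) ^ 2 :=
    calc (2 * |u| * |a - b|) ^ 2 = 4 * u ^ 2 * (a - b) ^ 2 := by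
          rw [mul_pow, mul_pow, sq_abs, sq_abs]
          norm_num
      _ ≤ 4 * u ^ 2 * (2 / 3 * (a + 2 * b) * (b * klFun (a / b))) := by
          gcongr
          exact sq_sub_le_mul_klFun ha hb
      _ ≤ _ := by nlinarith [sq_nonneg (2 / 3 * u ^ 2 * (a + 2 * b) - b * klFun (a / b))]
  exact (sq_le_sq₀ (by positivity) (by positivity)).1 hsq

end PointwisePinsker

section EntropyFunctional

variable {Ω : Type*} {mΩ : MeasurableSpace Ω} {γ : Measure Ω} [IsProbabilityMeasure γ]
  {f X : Ω → ℝ}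

lemma integrable_mul_klFun_div (hf : ∀ ω, 0 < f ω) (hfi : Integrable f γ)
    (hfl : Integrable (fun ω ↦ f ω * log (f ω)) γ) {b : ℝ} (hb : 0 < b) :
    Integrable (fun ω ↦ b * klFun (f ω / b)) γ := by
  simp_rw [mul_klFun_div (hf _) hb]
  exact ((hfl.sub (hfi.mul_const _)).add (integrable_const b)).sub hfi

lemma integral_mul_klFun_div_integral (hf : ∀ ω, 0 < f ω) (hfi : Integrable f γ)
    (hfl : Integrable (fun ω ↦ f ω * log (f ω)) γ) (hb : 0 < ∫ ω, f ω ∂γ) :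
    ∫ ω, (∫ ω, f ω ∂γ) * klFun (f ω / ∫ ω, f ω ∂γ) ∂γ =
      ∫ ω, f ω * log (f ω) ∂γ - (∫ ω, f ω ∂γ) * log (∫ ω, f ω ∂γ) := by
  set b := ∫ ω, f ω ∂γ with hb_def
  have hlog : Integrable (fun ω ↦ f ω * log (f ω) - f ω * log b) γ := hfl.sub (hfi.mul_const _)
  have hlog_add : Integrable (fun ω ↦ f ω * log (f ω) - f ω * log b + b) γ :=
    hlog.add (integrable_const b)
  simp_rw [mul_klFun_div (hf _) hb]
  rw [integral_sub hlog_add hfi, integral_add hlog (integrable_const b),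
    integral_sub hfl (hfi.mul_const _), integral_mul_const, ← hb_def]
  simp only [integral_const, probReal_univ, smul_eq_mul]
  ring

/-- The inequality is the dual form, with parameter `τ`, of
`(∫ X f)² ≤ (2 / 3) (∫ X² f + 2 Var X ∫ f) Ent f`. -/
lemma two_mul_abs_integral_mul_le (hf : ∀ ω, 0 < f ω) (hfi : Integrable f γ)
    (hfl : Integrable (fun ω ↦ f ω * log (f ω)) γ) (hX : MemLp X 2 γ) (hX0 : ∫ ω, X ω ∂γ = 0)
    (hXf : Integrable (fun ω ↦ X ω * f ω) γ) (hX2f : Integrable (fun ω ↦ X ω ^ 2 * f ω) γ)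
    (τ : ℝ) :
    2 * |τ| * |∫ ω, X ω * f ω ∂γ| ≤
      2 / 3 * τ ^ 2 * (∫ ω, X ω ^ 2 * f ω ∂γ + 2 * (∫ ω, X ω ^ 2 ∂γ) * ∫ ω, f ω ∂γ) +
        (∫ ω, f ω * log (f ω) ∂γ - (∫ ω, f ω ∂γ) * log (∫ ω, f ω ∂γ)) := by
  set b := ∫ ω, f ω ∂γ with hb_def
  have hb : 0 < b := by
    rw [hb_def, integral_pos_iff_support_of_nonneg (fun ω ↦ (hf ω).le) hfi,
      Function.support_eq_univ fun ω ↦ (hf ω).ne']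
    simp
  have hXi : Integrable X γ := hX.integrable one_le_two
  have hcentre : ∫ ω, X ω * f ω ∂γ = ∫ ω, X ω * (f ω - b) ∂γ := by
    simp_rw [mul_sub]
    rw [integral_sub hXf (hXi.mul_const b), integral_mul_const, hX0, zero_mul, sub_zero]
  have hcentred : Integrable (fun ω ↦ X ω * (f ω - b)) γ := by
    simp_rw [mul_sub]
    exact hXf.sub (hXi.mul_const b)
  have hquad : Integrable (fun ω ↦ 2 / 3 * τ ^ 2 * (X ω ^ 2 * f ω + 2 * b * X ω ^ 2)) γ :=
    (hX2f.add (hX.integrable_sq.const_mul _)).const_mul _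
  have hkl : Integrable (fun ω ↦ b * klFun (f ω / b)) γ := integrable_mul_klFun_div hf hfi hfl hb
  have hpoint (ω) : 2 * |τ| * |X ω * (f ω - b)| ≤
      2 / 3 * τ ^ 2 * (X ω ^ 2 * f ω + 2 * b * X ω ^ 2) + b * klFun (f ω / b) := by
    have h := two_mul_abs_mul_abs_sub_le (hf ω) hb (τ * X ω)
    rw [abs_mul] at h
    rw [abs_mul]
    linarith
  calc 2 * |τ| * |∫ ω, X ω * f ω ∂γ| ≤ ∫ ω, 2 * |τ| * |X ω * (f ω - b)| ∂γ := by
        rw [hcentre, integral_const_mul]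
        gcongr
        exact abs_integral_le_integral_abs
    _ ≤ ∫ ω, 2 / 3 * τ ^ 2 * (X ω ^ 2 * f ω + 2 * b * X ω ^ 2) + b * klFun (f ω / b) ∂γ :=
        integral_mono (hcentred.abs.const_mul _) (hquad.add hkl) hpoint
    _ = _ := by
        rw [integral_add hquad hkl, integral_const_mul,
          integral_add hX2f (hX.integrable_sq.const_mul _), integral_const_mul,
          integral_mul_klFun_div_integral hf hfi hfl hb]
        ring

end EntropyFunctional

section HeatKernel

/-- The density of the centred Gaussian law of variance `y`, with `y` a real variable so that it
can be added, scaled and differentiated; it is `0` for `y ≤ 0`. -/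
noncomputable def heatKernel (y x : ℝ) : ℝ := gaussianPDFReal 0 y.toNNReal x

variable {y h : ℝ}

lemma heatKernel_eq (hy : 0 ≤ y) (x : ℝ) :
    heatKernel y x = (√(2 * π * y))⁻¹ * exp (-x ^ 2 / (2 * y)) := by
  simp [heatKernel, gaussianPDFReal, hy]

lemma toNNReal_ne_zero (hy : 0 < y) : y.toNNReal ≠ 0 := by simpa using hy

lemma heatKernel_pos (hy : 0 < y) (x : ℝ) : 0 < heatKernel y x :=
  gaussianPDFReal_pos _ _ _ (toNNReal_ne_zero hy)

lemma heatKernel_sub (y x c : ℝ) : heatKernel y (x - c) = gaussianPDFReal c y.toNNReal x := by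
  rw [heatKernel, gaussianPDFReal_sub, zero_add]

lemma measurable_heatKernel (y : ℝ) : Measurable (heatKernel y) := measurable_gaussianPDFReal _ _

lemma heatKernel_le (hy : 0 ≤ y) (x : ℝ) : heatKernel y x ≤ (√(2 * π * y))⁻¹ := by
  rw [heatKernel_eq hy]
  refine mul_le_of_le_one_right (by positivity) (exp_le_one_iff.2 ?_)
  exact div_nonpos_of_nonpos_of_nonneg (neg_nonpos.2 (sq_nonneg x)) (by positivity)

lemma hasDerivAt_heatKernel (hy : 0 ≤ y) (x : ℝ) :
    HasDerivAt (heatKernel y) (-(x / y) * heatKernel y x) x := by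
  rw [funext (heatKernel_eq hy)]
  have hexponent : HasDerivAt (fun x : ℝ ↦ -x ^ 2 / (2 * y)) (-(x / y)) x := by
    refine (((hasDerivAt_pow 2 x).fun_neg).div_const (2 * y)).congr_deriv ?_
    push_cast
    ring
  exact (hexponent.exp.const_mul _).congr_deriv (by ring)

lemma integral_heatKernel_sub (hy : 0 < y) (c : ℝ) : ∫ x, heatKernel y (x - c) = 1 := by
  simpa only [heatKernel_sub] using integral_gaussianPDFReal_eq_one c (toNNReal_ne_zero hy)

lemma integrable_heatKernel_sub (y c : ℝ) : Integrable fun x ↦ heatKernel y (x - c) := by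
  simpa only [heatKernel_sub] using integrable_gaussianPDFReal c y.toNNReal

lemma integrable_heatKernel (y : ℝ) : Integrable (heatKernel y) := integrable_gaussianPDFReal 0 _

lemma integrable_mul_heatKernel_sub_iff {f : ℝ → ℝ} (hy : 0 < y) (c : ℝ) :
    Integrable (fun x ↦ f x * heatKernel y (x - c)) ↔
      Integrable f (gaussianReal c y.toNNReal) := by
  rw [gaussianReal_of_var_ne_zero _ (toNNReal_ne_zero hy),
    integrable_withDensity_iff (measurable_gaussianPDF _ _)
      (ae_of_all _ fun _ ↦ gaussianPDF_lt_top)]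
  simp only [toReal_gaussianPDF, heatKernel_sub]

lemma integral_mul_heatKernel_sub {f : ℝ → ℝ} (hy : 0 < y) (c : ℝ) :
    ∫ x, f x * heatKernel y (x - c) = ∫ x, f x ∂gaussianReal c y.toNNReal := by
  simp only [integral_gaussianReal_eq_integral_smul (toNNReal_ne_zero hy), heatKernel_sub,
    smul_eq_mul, mul_comm]

lemma integrable_id_mul_heatKernel (hy : 0 < y) : Integrable fun x ↦ x * heatKernel y x := by
  simpa using (integrable_mul_heatKernel_sub_iff hy 0).2
    ((memLp_id_gaussianReal' 1 (by simp)).integrable le_rfl)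

lemma integrable_sq_mul_heatKernel_sub (hy : 0 < y) (c : ℝ) :
    Integrable fun x ↦ x ^ 2 * heatKernel y (x - c) :=
  (integrable_mul_heatKernel_sub_iff hy c).2 (memLp_id_gaussianReal' 2 (by simp)).integrable_sq

lemma integral_sq_gaussianReal (m : ℝ) (v : NNReal) :
    ∫ x, x ^ 2 ∂gaussianReal m v = m ^ 2 + v := by
  have hvar := variance_eq_sub (memLp_id_gaussianReal' (μ := m) (v := v) 2 (by simp))
  rw [variance_id_gaussianReal] at hvar
  simp only [id_eq, Pi.pow_apply, integral_id_gaussianReal] at hvar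
  linarith

lemma integral_sq_mul_heatKernel_sub (hy : 0 < y) (c : ℝ) :
    ∫ x, x ^ 2 * heatKernel y (x - c) = c ^ 2 + y := by
  rw [integral_mul_heatKernel_sub hy, integral_sq_gaussianReal, coe_toNNReal y hy.le]

lemma heatKernel_sub_mul_heatKernel (hy : 0 < y) (hh : 0 < h) (x s : ℝ) :
    heatKernel y (x - s) * heatKernel h s =
      heatKernel (y + h) x * heatKernel (y * h / (y + h)) (s - h * x / (y + h)) := by
  rw [heatKernel_eq hy.le, heatKernel_eq hh.le, heatKernel_eq (by positivity),
    heatKernel_eq (by positivity), mul_mul_mul_comm, mul_mul_mul_comm (√(2 * π * (y + h)))⁻¹,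
    ← mul_inv, ← mul_inv, ← sqrt_mul (by positivity), ← sqrt_mul (by positivity), ← exp_add,
    ← exp_add]
  have hnorm : 2 * π * y * (2 * π * h) = 2 * π * (y + h) * (2 * π * (y * h / (y + h))) := by
    field_simp
  have hsquare : -(x - s) ^ 2 / (2 * y) + -s ^ 2 / (2 * h) = -x ^ 2 / (2 * (y + h)) +
      -(s - h * x / (y + h)) ^ 2 / (2 * (y * h / (y + h))) := by
    field_simp
    ring
  rw [hnorm, hsquare]

lemma integral_mul_heatKernel_sub_gaussianReal (f : ℝ → ℝ) (hy : 0 < y) (hh : 0 < h) (x : ℝ) :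
    ∫ s, f s * heatKernel y (x - s) ∂gaussianReal 0 h.toNNReal =
      heatKernel (y + h) x *
        ∫ s, f s ∂gaussianReal (h * x / (y + h)) (y * h / (y + h)).toNNReal := by
  rw [← integral_mul_heatKernel_sub hh, ← integral_mul_heatKernel_sub (by positivity),
    ← integral_const_mul]
  congr with s
  rw [sub_zero, mul_assoc, heatKernel_sub_mul_heatKernel hy hh]
  ring

lemma integral_heatKernel_sub_gaussianReal (hy : 0 < y) (hh : 0 < h) (x : ℝ) :
    ∫ s, heatKernel y (x - s) ∂gaussianReal 0 h.toNNReal = heatKernel (y + h) x := by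
  simpa using integral_mul_heatKernel_sub_gaussianReal (fun _ ↦ 1) hy hh x

lemma integral_id_mul_heatKernel_sub_gaussianReal (hy : 0 < y) (hh : 0 < h) (x : ℝ) :
    ∫ s, s * heatKernel y (x - s) ∂gaussianReal 0 h.toNNReal =
      -h * deriv (heatKernel (y + h)) x := by
  rw [integral_mul_heatKernel_sub_gaussianReal _ hy hh, integral_id_gaussianReal,
    (hasDerivAt_heatKernel (by positivity) x).deriv]
  ring

lemma integral_heatKernel_mul_cexp (hy : 0 < y) (ξ : ℝ) :
    ∫ x : ℝ, (heatKernel y x : ℂ) * Complex.exp (ξ * x * Complex.I) =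
      exp (-(y * ξ ^ 2 / 2)) := by
  have hchar := charFun_gaussianReal (μ := 0) (v := y.toNNReal) ξ
  rw [charFun_apply_real, integral_gaussianReal_eq_integral_smul (toNNReal_ne_zero hy)] at hchar
  simpa [heatKernel, hy.le] using hchar

end HeatKernel

section Entropy

/-- The differential entropy of the law with density `p`. -/
noncomputable def differentialEntropy (p : ℝ → ℝ) : ℝ := ∫ z, negMulLog (p z)

/-- A bounded, everywhere positive probability density with a finite second moment; these have a
finite differential entropy. -/
structure IsTameDensity (p : ℝ → ℝ) : Prop where
  measurable : Measurable p
  pos : ∀ z, 0 < p z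
  exists_le : ∃ C, ∀ z, p z ≤ C
  integrable : Integrable p
  integral_eq_one : ∫ z, p z = 1
  integrable_sq_mul : Integrable fun z ↦ z ^ 2 * p z

lemma negMulLog_le_of_pos {a b : ℝ} (ha : 0 < a) (hb : 0 < b) :
    negMulLog a ≤ -a * log b + b - a := by
  have := mul_klFun_div_nonneg ha hb
  rw [mul_klFun_div ha hb] at this
  rw [negMulLog]
  linarith

lemma log_heatKernel_one (z : ℝ) : log (heatKernel 1 z) = -log √(2 * π) - z ^ 2 / 2 := by
  rw [heatKernel_eq zero_le_one, log_mul (by positivity) (exp_pos _).ne', log_inv, log_exp]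
  ring_nf

lemma neg_mul_log_le_negMulLog {a C : ℝ} (ha : 0 < a) (haC : a ≤ C) :
    -log C * a ≤ negMulLog a := by
  rw [negMulLog]
  nlinarith [log_le_log ha haC]

namespace IsTameDensity

variable {p : ℝ → ℝ}

lemma negMulLog_le (hp : IsTameDensity p) (z : ℝ) :
    negMulLog (p z) ≤ log √(2 * π) * p z + 2⁻¹ * (z ^ 2 * p z) + (heatKernel 1 z - p z) := by
  have := negMulLog_le_of_pos (hp.pos z) (heatKernel_pos one_pos z)
  rw [log_heatKernel_one] at this
  linarith

lemma integrable_entropy_bound (hp : IsTameDensity p) :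
    Integrable fun z ↦
      log √(2 * π) * p z + 2⁻¹ * (z ^ 2 * p z) + (heatKernel 1 z - p z) :=
  ((hp.integrable.const_mul _).add (hp.integrable_sq_mul.const_mul _)).add
    ((integrable_heatKernel 1).sub hp.integrable)

lemma integrable_negMulLog (hp : IsTameDensity p) : Integrable fun z ↦ negMulLog (p z) := by
  obtain ⟨C, hC⟩ := hp.exists_le
  refine integrable_of_le_of_le (continuous_negMulLog.measurable.comp hp.measurable
    |>.aestronglyMeasurable) (ae_of_all _ fun z ↦ neg_mul_log_le_negMulLog (hp.pos z) (hC z))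
    (ae_of_all _ hp.negMulLog_le) (hp.integrable.const_mul _) hp.integrable_entropy_bound

lemma differentialEntropy_le (hp : IsTameDensity p) :
    differentialEntropy p ≤ log √(2 * π) + (∫ z, z ^ 2 * p z) / 2 := by
  have hgauss : ∫ z, heatKernel 1 z = 1 := by simpa using integral_heatKernel_sub one_pos 0
  have hmoment : Integrable fun z ↦ log √(2 * π) * p z + 2⁻¹ * (z ^ 2 * p z) :=
    (hp.integrable.const_mul _).add (hp.integrable_sq_mul.const_mul _)
  have hdiff : Integrable fun z ↦ heatKernel 1 z - p z :=
    (integrable_heatKernel 1).sub hp.integrable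
  calc differentialEntropy p
      ≤ ∫ z, (log √(2 * π) * p z + 2⁻¹ * (z ^ 2 * p z) + (heatKernel 1 z - p z)) :=
        integral_mono hp.integrable_negMulLog hp.integrable_entropy_bound hp.negMulLog_le
    _ = log √(2 * π) + (∫ z, z ^ 2 * p z) / 2 := by
        rw [integral_add hmoment hdiff,
          integral_add (hp.integrable.const_mul _) (hp.integrable_sq_mul.const_mul _),
          integral_sub (integrable_heatKernel 1) hp.integrable, integral_const_mul,
          integral_const_mul, hp.integral_eq_one, hgauss]
        ring

lemma neg_log_le_differentialEntropy (hp : IsTameDensity p) {C : ℝ} (hC : ∀ z, p z ≤ C) :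
    -log C ≤ differentialEntropy p := by
  calc -log C = ∫ z, -log C * p z := by rw [integral_const_mul, hp.integral_eq_one, mul_one]
    _ ≤ differentialEntropy p :=
        integral_mono (hp.integrable.const_mul _) hp.integrable_negMulLog
          fun z ↦ neg_mul_log_le_negMulLog (hp.pos z) (hC z)

lemma exists_abs_negMulLog_le (hp : IsTameDensity p) : ∃ C, ∀ z, |negMulLog (p z)| ≤ C := by
  obtain ⟨C, hC⟩ := hp.exists_le
  obtain ⟨D, hD⟩ := (isCompact_Icc (a := 0) (b := C)).exists_bound_of_continuousOn
    continuous_negMulLog.continuousOn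
  exact ⟨D, fun z ↦ hD _ ⟨(hp.pos z).le, hC z⟩⟩

end IsTameDensity

section Smoothing

variable {γ : Measure ℝ} {p : ℝ → ℝ}

lemma integrable_mul_comp_sub {f g : ℝ → ℝ} {C : ℝ} (hf : Integrable f γ) (hg : Measurable g)
    (hC : ∀ z, |g z| ≤ C) (z : ℝ) : Integrable (fun s ↦ f s * g (z - s)) γ :=
  hf.mul_bdd (hg.comp (measurable_const.sub measurable_id)).aestronglyMeasurable
    (ae_of_all _ fun _ ↦ hC _)

lemma integrable_integral_mul_comp_sub [SFinite γ] {f g : ℝ → ℝ} (hf : Integrable f γ)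
    (hg : Integrable g) : Integrable fun z ↦ ∫ s, f s * g (z - s) ∂γ :=
  (hf.convolution_integrand (ContinuousLinearMap.mul ℝ ℝ) hg).integral_prod_left

lemma integral_integral_mul_comp_sub [SFinite γ] {f g : ℝ → ℝ} (hf : Integrable f γ)
    (hg : Integrable g) :
    ∫ z, ∫ s, f s * g (z - s) ∂γ = (∫ s, f s ∂γ) * ∫ z, g z :=
  integral_convolution (ContinuousLinearMap.mul ℝ ℝ) hf hg

variable [IsProbabilityMeasure γ]

lemma two_mul_abs_integral_mul_comp_sub_le (hp : IsTameDensity p) (hγ : MemLp id 2 γ)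
    (hγ0 : ∫ s, s ∂γ = 0) (τ z : ℝ) :
    2 * |τ| * |∫ s, s * p (z - s) ∂γ| ≤
      2 / 3 * τ ^ 2 *
          (∫ s, s ^ 2 * p (z - s) ∂γ + 2 * (∫ s, s ^ 2 ∂γ) * ∫ s, p (z - s) ∂γ) +
        (negMulLog (∫ s, p (z - s) ∂γ) - ∫ s, negMulLog (p (z - s)) ∂γ) := by
  obtain ⟨C, hC⟩ := hp.exists_le
  obtain ⟨D, hD⟩ := hp.exists_abs_negMulLog_le
  have hC' (z) : |p z| ≤ C := (abs_of_pos (hp.pos z)).trans_le (hC z)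
  have hp1 : Integrable (fun s ↦ p (z - s)) γ := by
    simpa using integrable_mul_comp_sub (integrable_const (1 : ℝ)) hp.measurable hC' z
  have hplog : Integrable (fun s ↦ negMulLog (p (z - s))) γ := by
    simpa using integrable_mul_comp_sub (integrable_const (1 : ℝ))
      (continuous_negMulLog.measurable.comp hp.measurable) hD z
  have hmain := two_mul_abs_integral_mul_le (fun s ↦ hp.pos (z - s)) hp1
    (by simpa [negMulLog] using hplog.neg) hγ hγ0
    (integrable_mul_comp_sub (hγ.integrable one_le_two) hp.measurable hC' z)
    (integrable_mul_comp_sub hγ.integrable_sq hp.measurable hC' z) τ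
  simp only [negMulLog, neg_mul, integral_neg, id_eq] at hmain ⊢
  linarith

theorem sq_integral_abs_le_differentialEntropy_sub (hp : IsTameDensity p)
    (hq : IsTameDensity fun z ↦ ∫ s, p (z - s) ∂γ) (hγ : MemLp id 2 γ) (hγ0 : ∫ s, s ∂γ = 0) :
    (∫ z, |∫ s, s * p (z - s) ∂γ|) ^ 2 ≤ 2 * (∫ s, s ^ 2 ∂γ) *
      (differentialEntropy (fun z ↦ ∫ s, p (z - s) ∂γ) - differentialEntropy p) := by
  set q : ℝ → ℝ := fun z ↦ ∫ s, p (z - s) ∂γ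
  set h := ∫ s, s ^ 2 ∂γ
  set A := ∫ z, |∫ s, s * p (z - s) ∂γ|
  have hγ1 : Integrable (fun _ ↦ (1 : ℝ)) γ := integrable_const 1
  have hfirst : Integrable fun z ↦ ∫ s, s * p (z - s) ∂γ :=
    integrable_integral_mul_comp_sub (hγ.integrable one_le_two) hp.integrable
  have hsecond : Integrable fun z ↦ ∫ s, s ^ 2 * p (z - s) ∂γ :=
    integrable_integral_mul_comp_sub hγ.integrable_sq hp.integrable
  have hlog : Integrable fun z ↦ ∫ s, negMulLog (p (z - s)) ∂γ := by
    simpa using integrable_integral_mul_comp_sub hγ1 hp.integrable_negMulLog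
  have integral_log : ∫ z, ∫ s, negMulLog (p (z - s)) ∂γ = differentialEntropy p := by
    simpa [differentialEntropy] using integral_integral_mul_comp_sub hγ1 hp.integrable_negMulLog
  have integral_second : ∫ z, ∫ s, s ^ 2 * p (z - s) ∂γ = h := by
    simpa [hp.integral_eq_one] using
      integral_integral_mul_comp_sub hγ.integrable_sq hp.integrable
  have hquad : Integrable fun z ↦ ∫ s, s ^ 2 * p (z - s) ∂γ + 2 * h * q z :=
    hsecond.add (hq.integrable.const_mul _)
  have hgain : Integrable fun z ↦ negMulLog (q z) - ∫ s, negMulLog (p (z - s)) ∂γ :=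
    hq.integrable_negMulLog.sub hlog
  have hτ (τ : ℝ) :
      2 * |τ| * A ≤ 2 * h * τ ^ 2 + (differentialEntropy q - differentialEntropy p) :=
    calc 2 * |τ| * A = ∫ z, 2 * |τ| * |∫ s, s * p (z - s) ∂γ| := (integral_const_mul _ _).symm
      _ ≤ ∫ z, (2 / 3 * τ ^ 2 * (∫ s, s ^ 2 * p (z - s) ∂γ + 2 * h * q z) +
            (negMulLog (q z) - ∫ s, negMulLog (p (z - s)) ∂γ)) :=
          integral_mono (hfirst.abs.const_mul _)
            ((hquad.const_mul _).add hgain)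
            (two_mul_abs_integral_mul_comp_sub_le hp hγ hγ0 τ)
      _ = _ := by
          rw [integral_add (hquad.const_mul _) hgain, integral_const_mul,
            integral_add hsecond (hq.integrable.const_mul _), integral_const_mul,
            integral_sub hq.integrable_negMulLog hlog, integral_log, integral_second,
            hq.integral_eq_one]
          simp only [differentialEntropy]
          ring
  have hdiscrim := discrim_le_zero (a := 2 * h) (b := -2 * A)
    (c := differentialEntropy q - differentialEntropy p) fun τ ↦ by
      have hA : 0 ≤ A := integral_nonneg fun _ ↦ abs_nonneg _
      nlinarith [hτ τ, mul_le_mul_of_nonneg_right (le_abs_self τ) hA]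
  rw [discrim] at hdiscrim
  linarith

end Smoothing

end Entropy

section GaussianMixture

variable {ι : Type*} [Fintype ι] {x : ι → ℝ} {y h : ℝ}

/-- The density of `x i + √y Z`, with `i` uniform and `Z` an independent standard Gaussian. -/
noncomputable def gaussianMixture (x : ι → ℝ) (y z : ℝ) : ℝ :=
  (Fintype.card ι : ℝ)⁻¹ * ∑ i, heatKernel y (z - x i)

lemma hasDerivAt_gaussianMixture (hy : 0 ≤ y) (x : ι → ℝ) (z : ℝ) :
    HasDerivAt (gaussianMixture x y)
      ((Fintype.card ι : ℝ)⁻¹ * ∑ i, deriv (heatKernel y) (z - x i)) z := by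
  refine (HasDerivAt.fun_sum fun i _ ↦ ?_).const_mul _
  have := (hasDerivAt_heatKernel hy (z - x i)).differentiableAt.hasDerivAt
  exact this.comp_sub_const z (x i)

section Integral

variable {Ω E : Type*} {mΩ : MeasurableSpace Ω} {μ : Measure Ω} [NormedAddCommGroup E]
  [NormedSpace ℝ E] {f : Ω → E} {w : Ω → ℝ}

lemma integrable_gaussianMixture_smul
    (hf : ∀ i, Integrable (fun ω ↦ heatKernel y (w ω - x i) • f ω) μ) :
    Integrable (fun ω ↦ gaussianMixture x y (w ω) • f ω) μ := by
  simp only [gaussianMixture, mul_smul, Finset.sum_smul]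
  exact (integrable_finsetSum _ fun i _ ↦ hf i).smul (Fintype.card ι : ℝ)⁻¹

lemma integral_gaussianMixture_smul
    (hf : ∀ i, Integrable (fun ω ↦ heatKernel y (w ω - x i) • f ω) μ) :
    ∫ ω, gaussianMixture x y (w ω) • f ω ∂μ =
      (Fintype.card ι : ℝ)⁻¹ • ∑ i, ∫ ω, heatKernel y (w ω - x i) • f ω ∂μ := by
  simp only [gaussianMixture, mul_smul, Finset.sum_smul, integral_smul]
  rw [integral_finsetSum _ fun i _ ↦ hf i]

end Integral

lemma integrable_smul_cexp {ν : Measure ℝ} {f : ℝ → ℝ} (hf : Integrable f ν) (ξ : ℝ) :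
    Integrable (fun z : ℝ ↦ f z • Complex.exp (ξ * z * Complex.I)) ν := by
  refine hf.smul_bdd 1 (by fun_prop) (ae_of_all _ fun z ↦ ?_)
  rw [← Complex.ofReal_mul, Complex.norm_exp_ofReal_mul_I]

lemma integral_deriv_smul_cexp {f : ℝ → ℝ} (hf : Differentiable ℝ f) (hfi : Integrable f)
    (hfi' : Integrable (deriv f)) (ξ : ℝ) :
    ∫ z : ℝ, deriv f z • Complex.exp (ξ * z * Complex.I) =
      -(ξ * Complex.I) * ∫ z : ℝ, f z • Complex.exp (ξ * z * Complex.I) := by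
  have hexp (z : ℝ) : HasDerivAt (fun z : ℝ ↦ Complex.exp (ξ * z * Complex.I))
      (ξ * Complex.I * Complex.exp (ξ * z * Complex.I)) z := by
    have := (((hasDerivAt_id (z : ℂ)).const_mul (ξ : ℂ)).mul_const Complex.I).cexp.comp_ofReal
    simpa [mul_comm] using this
  have hparts := integral_bilinear_hasDerivAt_right_eq_neg_left_of_integrable
    (L := ContinuousLinearMap.lsmul ℝ ℝ) (fun z _ ↦ (hf z).hasDerivAt) (fun z _ ↦ hexp z)
    (((integrable_smul_cexp hfi ξ).const_mul (ξ * Complex.I)).congr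
      (ae_of_all _ fun z ↦ (mul_smul_comm _ _ _)))
    (integrable_smul_cexp hfi' ξ) (integrable_smul_cexp hfi ξ)
  simp only [ContinuousLinearMap.lsmul_apply, ← mul_smul_comm, integral_const_mul] at hparts
  rw [neg_mul, hparts, neg_neg]

lemma integrable_deriv_heatKernel (hy : 0 < y) : Integrable (deriv (heatKernel y)) := by
  rw [funext fun z ↦ (hasDerivAt_heatKernel hy.le z).deriv]
  refine ((integrable_id_mul_heatKernel hy).const_mul (-y⁻¹)).congr (ae_of_all _ fun z ↦ ?_)
  simp only
  ring

lemma integrable_deriv_gaussianMixture (hy : 0 < y) (x : ι → ℝ) :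
    Integrable (deriv (gaussianMixture x y)) := by
  rw [funext fun z ↦ (hasDerivAt_gaussianMixture hy.le x z).deriv]
  exact (integrable_finsetSum _ fun i _ ↦
    (integrable_deriv_heatKernel hy).comp_sub_right (x i)).const_mul _

lemma integrable_gaussianMixture (x : ι → ℝ) (y : ℝ) : Integrable (gaussianMixture x y) :=
  (integrable_finsetSum _ fun i _ ↦ integrable_heatKernel_sub y (x i)).const_mul _

lemma integral_heatKernel_sub_smul_cexp (hy : 0 < y) (c ξ : ℝ) :
    ∫ z : ℝ, heatKernel y (z - c) • Complex.exp (ξ * z * Complex.I) =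
      exp (-(y * ξ ^ 2 / 2)) * Complex.exp (ξ * c * Complex.I) := by
  rw [← integral_heatKernel_mul_cexp hy, ← integral_mul_const,
    ← integral_add_right_eq_self _ c]
  congr with z
  rw [add_sub_cancel_right, Complex.real_smul, Complex.ofReal_add, mul_add, add_mul,
    Complex.exp_add, mul_assoc (heatKernel y z : ℂ)]

lemma integral_deriv_gaussianMixture_smul_cexp (hy : 0 < y) (x : ι → ℝ) (ξ : ℝ) :
    ∫ z : ℝ, deriv (gaussianMixture x y) z • Complex.exp (ξ * z * Complex.I) =
      -(ξ * Complex.I) * exp (-(y * ξ ^ 2 / 2)) *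
        ((Fintype.card ι : ℂ)⁻¹ * ∑ i, Complex.exp (ξ * x i * Complex.I)) := by
  rw [integral_deriv_smul_cexp
    (fun z ↦ (hasDerivAt_gaussianMixture hy.le x z).differentiableAt)
    (integrable_gaussianMixture x y) (integrable_deriv_gaussianMixture hy x),
    integral_gaussianMixture_smul (w := fun z ↦ z)
      fun i ↦ integrable_smul_cexp (integrable_heatKernel_sub y (x i)) ξ]
  simp only [integral_heatKernel_sub_smul_cexp hy, ← Finset.mul_sum]
  rw [Complex.real_smul]
  push_cast
  ring

lemma measurable_gaussianMixture (x : ι → ℝ) (y : ℝ) : Measurable (gaussianMixture x y) :=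
  (Finset.measurable_fun_sum _ fun i _ ↦
    (measurable_heatKernel y).comp (measurable_id.sub_const (x i))).const_mul _

lemma integrable_heatKernel_smul_gaussianReal {f : ℝ → ℝ} {γ : Measure ℝ} (hf : Integrable f γ)
    (hy : 0 < y) (z c : ℝ) : Integrable (fun s ↦ heatKernel y (z - s - c) • f s) γ := by
  have hmeas : Measurable fun s ↦ heatKernel y (z - s - c) :=
    (measurable_heatKernel y).comp ((measurable_id.const_sub z).sub_const c)
  refine hf.bdd_mul (c := (√(2 * π * y))⁻¹) hmeas.aestronglyMeasurable (ae_of_all _ fun s ↦ ?_)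
  rw [norm_of_nonneg (heatKernel_pos hy _).le]
  exact heatKernel_le hy.le _

lemma integral_gaussianMixture_sub_gaussianReal (hy : 0 < y) (hh : 0 < h) (x : ι → ℝ) (z : ℝ) :
    ∫ s, gaussianMixture x y (z - s) ∂gaussianReal 0 h.toNNReal = gaussianMixture x (y + h) z := by
  have := integral_gaussianMixture_smul (x := x) (w := fun s ↦ z - s)
    fun i ↦ integrable_heatKernel_smul_gaussianReal
      (integrable_const (μ := gaussianReal 0 h.toNNReal) (1 : ℝ)) hy z (x i)
  simp only [smul_eq_mul, mul_one, sub_right_comm z _ (x _),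
    integral_heatKernel_sub_gaussianReal hy hh] at this
  exact this

lemma integral_mul_gaussianMixture_sub_gaussianReal (hy : 0 < y) (hh : 0 < h) (x : ι → ℝ)
    (z : ℝ) :
    ∫ s, s * gaussianMixture x y (z - s) ∂gaussianReal 0 h.toNNReal =
      -h * deriv (gaussianMixture x (y + h)) z := by
  have := integral_gaussianMixture_smul (x := x) (w := fun s ↦ z - s)
    fun i ↦ integrable_heatKernel_smul_gaussianReal
      ((memLp_id_gaussianReal' (μ := 0) (v := h.toNNReal) 1 (by simp)).integrable le_rfl)
      hy z (x i)
  simp only [smul_eq_mul, id_eq, sub_right_comm z _ (x _), mul_comm (heatKernel _ _),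
    mul_comm (gaussianMixture _ _ _), integral_id_mul_heatKernel_sub_gaussianReal hy hh] at this
  rw [this, (hasDerivAt_gaussianMixture (by positivity) x z).deriv, ← Finset.mul_sum]
  ring

lemma integrable_sq_mul_gaussianMixture (hy : 0 < y) (x : ι → ℝ) :
    Integrable fun z ↦ z ^ 2 * gaussianMixture x y z := by
  simpa only [smul_eq_mul, mul_comm] using integrable_gaussianMixture_smul (w := fun z ↦ z)
    fun i ↦ (integrable_sq_mul_heatKernel_sub hy (x i)).congr (ae_of_all _ fun z ↦ mul_comm _ _)

variable [Nonempty ι]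

lemma inv_card_mul_sum_le {f : ι → ℝ} {C : ℝ} (hf : ∀ i, f i ≤ C) :
    (Fintype.card ι : ℝ)⁻¹ * ∑ i, f i ≤ C := by
  rw [inv_mul_le_iff₀ (by exact_mod_cast Fintype.card_pos), ← nsmul_eq_mul]
  exact Finset.sum_le_card_nsmul _ _ _ fun i _ ↦ hf i

lemma integral_sq_mul_gaussianMixture_le (hy : 0 < y) {B : ℝ} (hB : ∀ i, |x i| ≤ B) :
    ∫ z, z ^ 2 * gaussianMixture x y z ≤ B ^ 2 + y := by
  have := integral_gaussianMixture_smul (x := x) (w := fun z ↦ z) (f := fun z : ℝ ↦ z ^ 2)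
    fun i ↦ (integrable_sq_mul_heatKernel_sub hy (x i)).congr (ae_of_all _ fun z ↦ mul_comm _ _)
  simp only [smul_eq_mul, mul_comm (gaussianMixture _ _ _), mul_comm (heatKernel _ _),
    integral_sq_mul_heatKernel_sub hy] at this
  rw [this]
  exact inv_card_mul_sum_le fun i ↦
    add_le_add_left (sq_le_sq.2 ((hB i).trans (le_abs_self B))) y

theorem isTameDensity_gaussianMixture (hy : 0 < y) (x : ι → ℝ) :
    IsTameDensity (gaussianMixture x y) where
  measurable := measurable_gaussianMixture x y
  pos z := mul_pos (by simp [Fintype.card_pos])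
    (Finset.sum_pos (fun i _ ↦ heatKernel_pos hy _) Finset.univ_nonempty)
  exists_le := ⟨_, fun z ↦ inv_card_mul_sum_le fun i ↦ heatKernel_le hy.le (z - x i)⟩
  integrable := integrable_gaussianMixture x y
  integral_eq_one := by
    have := integral_gaussianMixture_smul (x := x) (w := fun z ↦ z) (f := fun _ ↦ (1 : ℝ))
      fun i ↦ (integrable_heatKernel_sub y (x i)).smul_const 1
    simpa [integral_heatKernel_sub hy] using this
  integrable_sq_mul := integrable_sq_mul_gaussianMixture hy x

theorem mul_sq_integral_abs_deriv_gaussianMixture_le (hy : 0 < y) (hh : 0 < h) (x : ι → ℝ) :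
    h * (∫ z, |deriv (gaussianMixture x (y + h)) z|) ^ 2 ≤
      2 * (differentialEntropy (gaussianMixture x (y + h)) -
        differentialEntropy (gaussianMixture x y)) := by
  have hconv := integral_gaussianMixture_sub_gaussianReal hy hh x
  have hmain := sq_integral_abs_le_differentialEntropy_sub (γ := gaussianReal 0 h.toNNReal)
    (isTameDensity_gaussianMixture hy x)
    (by simpa only [hconv] using isTameDensity_gaussianMixture (by positivity) x)
    (memLp_id_gaussianReal' 2 (by simp)) integral_id_gaussianReal
  simp only [hconv, integral_mul_gaussianMixture_sub_gaussianReal hy hh, abs_mul, abs_neg,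
    abs_of_pos hh, integral_const_mul, integral_sq_gaussianReal, coe_toNNReal _ hh.le] at hmain
  refine le_of_mul_le_mul_left ?_ hh
  linarith

lemma differentialEntropy_gaussianMixture_mono (x : ι → ℝ) :
    MonotoneOn (fun y ↦ differentialEntropy (gaussianMixture x y)) (Set.Ioi 0) := by
  intro y hy y' _ hyy'
  rcases hyy'.eq_or_lt with rfl | hlt
  · rfl
  have := mul_sq_integral_abs_deriv_gaussianMixture_le hy (sub_pos.2 hlt) x
  rw [add_sub_cancel] at this
  have hnonneg : 0 ≤ (y' - y) * (∫ z, |deriv (gaussianMixture x y') z|) ^ 2 :=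
    mul_nonneg (sub_nonneg.2 hyy') (sq_nonneg _)
  simp only
  linarith

lemma gaussianMixture_le_of_separated {r : ℝ} (hy : 0 < y) (hr : 0 ≤ r)
    (hx : Pairwise fun i j ↦ r ≤ |x i - x j|) (z : ℝ) :
    gaussianMixture x y z ≤
      ((Fintype.card ι : ℝ)⁻¹ + exp (-(r ^ 2 / (8 * y)))) * (√(2 * π * y))⁻¹ := by
  classical
  set g := (√(2 * π * y))⁻¹
  set e := exp (-(r ^ 2 / (8 * y))) with he
  obtain ⟨i₀, hi₀⟩ := Finite.exists_min fun i ↦ |z - x i|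
  have hfar (i) (hi : i ≠ i₀) : heatKernel y (z - x i) ≤ e * g := by
    have hdist : r / 2 ≤ |z - x i| := by
      have htri := abs_sub_le (x i) z (x i₀)
      rw [abs_sub_comm (x i) z] at htri
      linarith [hx hi, hi₀ i]
    have hsq : (r / 2) ^ 2 ≤ (z - x i) ^ 2 := by
      rw [← sq_abs (z - x i)]
      gcongr
    rw [heatKernel_eq hy.le, mul_comm, neg_div, he]
    gcongr exp (-?_) * _
    calc r ^ 2 / (8 * y) = (r / 2) ^ 2 / (2 * y) := by ring
      _ ≤ _ := by gcongr
  have hterm (i) : heatKernel y (z - x i) ≤ (if i = i₀ then g else 0) + e * g := by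
    split_ifs with hi
    · exact (heatKernel_le hy.le _).trans (le_add_of_nonneg_right (by positivity))
    · exact (hfar i hi).trans_eq (zero_add _).symm
  have hcard : (Fintype.card ι : ℝ) ≠ 0 := by simp
  calc gaussianMixture x y z
      ≤ (Fintype.card ι : ℝ)⁻¹ * ∑ i, ((if i = i₀ then g else 0) + e * g) := by
        rw [gaussianMixture]
        gcongr with i
        exact hterm i
    _ = ((Fintype.card ι : ℝ)⁻¹ + e) * g := by
        rw [Finset.sum_add_distrib, Finset.sum_ite_eq' Finset.univ i₀, if_pos (Finset.mem_univ _),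
          Finset.sum_const, Finset.card_univ, nsmul_eq_mul]
        field_simp

theorem le_differentialEntropy_gaussianMixture_of_separated {r : ℝ} (hy : 0 < y) (hr : 0 ≤ r)
    (hx : Pairwise fun i j ↦ r ≤ |x i - x j|)
    (hcard : Fintype.card ι * exp (-(r ^ 2 / (8 * y))) ≤ 1) :
    log (Fintype.card ι) + log y / 2 - log 2 ≤ differentialEntropy (gaussianMixture x y) := by
  have hpos : 0 < (Fintype.card ι : ℝ) := by exact_mod_cast Fintype.card_pos
  have hexp : exp (-(r ^ 2 / (8 * y))) ≤ (Fintype.card ι : ℝ)⁻¹ := by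
    rwa [← one_div, le_div_iff₀' hpos]
  have hbound (z) : gaussianMixture x y z ≤ 2 * (Fintype.card ι : ℝ)⁻¹ * (√(2 * π * y))⁻¹ :=
    (gaussianMixture_le_of_separated hy hr hx z).trans <| by
      gcongr
      linarith
  refine le_trans ?_ ((isTameDensity_gaussianMixture hy x).neg_log_le_differentialEntropy hbound)
  rw [log_mul (by positivity) (by positivity), log_mul two_ne_zero (by positivity), log_inv,
    log_inv, log_sqrt (by positivity), log_mul (by positivity) hy.ne']
  have : 0 ≤ log (2 * π) := log_nonneg (by linarith [pi_gt_three])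
  linarith

theorem differentialEntropy_gaussianMixture_le (hy : 0 < y) {B : ℝ} (hB : ∀ i, |x i| ≤ B) :
    differentialEntropy (gaussianMixture x y) ≤ log √(2 * π) + (B ^ 2 + y) / 2 := by
  have := (isTameDensity_gaussianMixture hy x).differentialEntropy_le
  linarith [integral_sq_mul_gaussianMixture_le hy hB]

end GaussianMixture

section RootSeparation

open Polynomial

variable {P Q : ℤ[X]}

lemma one_le_mahlerMeasure (hP : P ≠ 0) : 1 ≤ _root_.mahlerMeasure P := by
  have hlead : (1 : ℝ) ≤ |(P.leadingCoeff : ℝ)| := by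
    exact_mod_cast Int.one_le_abs (leadingCoeff_ne_zero.2 hP)
  simpa only [max_comm, one_mul] using!
    mul_le_mul hlead (one_le_prod_max_one_norm_roots (P.map (algebraMap ℤ ℂ))) zero_le_one
      (abs_nonneg _)

lemma isCoprime_map_of_irreducible_of_aeval_ne_zero {R : Type*} [CommRing R] [IsDomain R]
    [Algebra ℚ R] {z : R} (hirr : Irreducible P) (hP : aeval z P = 0) (hQ : aeval z Q ≠ 0) :
    IsCoprime (P.map (Int.castRingHom ℚ)) (Q.map (Int.castRingHom ℚ)) := by
  have hdeg : P.natDegree ≠ 0 := by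
    intro h
    have hC := eq_C_of_natDegree_eq_zero h
    rw [hC, aeval_C, eq_intCast, ← map_intCast (algebraMap ℚ R),
      FaithfulSMul.algebraMap_eq_zero_iff] at hP
    rw [Int.cast_eq_zero.1 hP, C_0] at hC
    exact hirr.ne_zero hC
  have hirr' : Irreducible (P.map (Int.castRingHom ℚ)) :=
    (IsPrimitive.Int.irreducible_iff_irreducible_map_cast (hirr.isPrimitive hdeg)).1 hirr
  refine (hirr'.isCoprime_or_dvd _).resolve_right fun ⟨A, hA⟩ ↦ hQ ?_
  have heval := congrArg (aeval z) hA
  rwa [map_mul, ← algebraMap_int_eq, aeval_map_algebraMap, aeval_map_algebraMap, hP,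
    zero_mul] at heval

lemma abs_resultant_eq_prod_norm_aeval (P Q : ℤ[X]) :
    |((resultant P Q : ℤ) : ℝ)| = |(P.leadingCoeff : ℝ)| ^ Q.natDegree *
      ((P.aroots ℂ).map fun z ↦ ‖aeval z Q‖).prod := by
  have hinj : Function.Injective (algebraMap ℤ ℂ) := Int.cast_injective
  have hres := resultant_eq_prod_eval (P.map (algebraMap ℤ ℂ)) (Q.map (algebraMap ℤ ℂ))
    Q.natDegree natDegree_map_le (IsAlgClosed.splits _)
  rw [natDegree_map_eq_of_injective hinj, resultant_map_map,
    leadingCoeff_map_of_injective hinj] at hres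
  have hnorm := congrArg norm hres
  simp only [algebraMap_int_eq, eq_intCast, Complex.norm_intCast, norm_mul, norm_pow] at hnorm
  rw [hnorm, ← normHom_apply, map_multiset_prod, Multiset.map_map]
  simp only [Function.comp_def, eval_map, aeval_def, normHom_apply, aroots_def, algebraMap_int_eq]

lemma norm_aeval_le_of_abs_coeff_le {H : ℝ} (hQ : ∀ k, |(Q.coeff k : ℝ)| ≤ H) (z : ℂ) :
    ‖aeval z Q‖ ≤ (Q.natDegree + 1) * H * max ‖z‖ 1 ^ Q.natDegree := by
  have hterm (i) (hi : i ∈ Finset.range (Q.natDegree + 1)) :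
      ‖Q.coeff i • z ^ i‖ ≤ H * max ‖z‖ 1 ^ Q.natDegree := by
    rw [zsmul_eq_mul, norm_mul, norm_pow, Complex.norm_intCast]
    have hpow : ‖z‖ ^ i ≤ max ‖z‖ 1 ^ Q.natDegree :=
      (pow_le_pow_left₀ (norm_nonneg z) (le_max_left _ _) i).trans
        (pow_le_pow_right₀ (le_max_right _ _) (Finset.mem_range_succ_iff.1 hi))
    exact mul_le_mul (hQ i) hpow (by positivity) ((abs_nonneg _).trans (hQ i))
  rw [aeval_eq_sum_range]
  refine (norm_sum_le_of_le _ hterm).trans_eq ?_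
  rw [Finset.sum_const, Finset.card_range, nsmul_eq_mul]
  push_cast
  ring

lemma resultant_ne_zero_of_isCoprime_map
    (hPQ : IsCoprime (P.map (Int.castRingHom ℚ)) (Q.map (Int.castRingHom ℚ))) :
    resultant P Q ≠ 0 := by
  have hinj : Function.Injective (Int.castRingHom ℚ) := Int.cast_injective
  have hne := resultant_ne_zero _ _ hPQ
  rw [natDegree_map_eq_of_injective hinj, natDegree_map_eq_of_injective hinj,
    resultant_map_map] at hne
  exact fun h ↦ hne (by rw [h, map_zero])

lemma card_aroots_complex (P : Polynomial ℤ) : (P.aroots ℂ).card = P.natDegree := by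
  have h := (IsAlgClosed.splits (P.map (algebraMap ℤ ℂ))).natDegree_eq_card_roots
  rw [natDegree_map_eq_of_injective Int.cast_injective, ← aroots_def] at h
  exact h.symm

/-- A Liouville-type separation bound: the resultant of coprime integer polynomials is a nonzero
integer. -/
lemma one_le_norm_aeval_mul_mahlerMeasure_pow
    (hPQ : IsCoprime (P.map (Int.castRingHom ℚ)) (Q.map (Int.castRingHom ℚ)))
    {z : ℂ} (hz : z ∈ P.aroots ℂ) {H : ℝ} (hQ : ∀ k, |(Q.coeff k : ℝ)| ≤ H) :
    1 ≤ ‖aeval z Q‖ * (_root_.mahlerMeasure P ^ Q.natDegree *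
      ((Q.natDegree + 1) * H) ^ (P.natDegree - 1)) := by
  obtain ⟨T, hT⟩ := Multiset.exists_cons_of_mem hz
  have hcard : T.card = P.natDegree - 1 := by
    rw [← card_aroots_complex, hT, Multiset.card_cons, Nat.add_sub_cancel]
  have hH : 0 ≤ H := (abs_nonneg _).trans (hQ 0)
  have hprod : (T.map fun w ↦ ‖aeval w Q‖).prod ≤ ((Q.natDegree + 1) * H) ^ (P.natDegree - 1) *
      (T.map fun w ↦ max ‖w‖ 1).prod ^ Q.natDegree := by
    rw [← hcard, ← Multiset.prod_map_pow, ← Multiset.prod_replicate, ← Multiset.map_const',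
      ← Multiset.prod_map_mul]
    exact Multiset.prod_map_le_prod_map₀ _ _ (fun w _ ↦ norm_nonneg _)
      fun w _ ↦ norm_aeval_le_of_abs_coeff_le hQ w
  have hT0 : 0 ≤ (T.map fun w ↦ max ‖w‖ 1).prod :=
    Multiset.prod_map_nonneg fun w _ ↦ zero_le_one.trans (le_max_right _ _)
  calc (1 : ℝ) ≤ |((resultant P Q : ℤ) : ℝ)| := by
        exact_mod_cast Int.one_le_abs (resultant_ne_zero_of_isCoprime_map hPQ)
    _ = ‖aeval z Q‖ * (|(P.leadingCoeff : ℝ)| ^ Q.natDegree *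
          (T.map fun w ↦ ‖aeval w Q‖).prod) := by
        rw [abs_resultant_eq_prod_norm_aeval, hT, Multiset.map_cons, Multiset.prod_cons]
        ring
    _ ≤ ‖aeval z Q‖ * (|(P.leadingCoeff : ℝ)| ^ Q.natDegree *
          (((Q.natDegree + 1) * H) ^ (P.natDegree - 1) *
            (max ‖z‖ 1 * (T.map fun w ↦ max ‖w‖ 1).prod) ^ Q.natDegree)) := by
        gcongr
        refine hprod.trans ?_
        gcongr
        exact le_mul_of_one_le_left hT0 (le_max_right _ _)
    _ = _ := by
        rw [_root_.mahlerMeasure, hT, Multiset.map_cons, Multiset.prod_cons]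
        ring

end RootSeparation

section Detail

variable {ι : Type*} [Fintype ι]

/-- The scale-invariant smoothness defect of `x i + √y Z`, with `i` uniform and `Z` an independent
standard Gaussian: `y` times the square of the total variation of the density. -/
noncomputable def detailSq (x : ι → ℝ) (y : ℝ) : ℝ :=
  y * (∫ z, |deriv (gaussianMixture x y) z|) ^ 2

lemma detailSq_nonneg {y : ℝ} (hy : 0 ≤ y) (x : ι → ℝ) : 0 ≤ detailSq x y :=
  mul_nonneg hy (sq_nonneg _)

variable [Nonempty ι]

lemma integral_abs_deriv_heatKernel_le {y : ℝ} (hy : 0 < y) :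
    ∫ x, |deriv (heatKernel y) x| ≤ (√y)⁻¹ := by
  have hmoment : ∫ x, |x| ∂gaussianReal 0 y.toNNReal ≤ √y := by
    have hLp : MemLp (fun x ↦ |x|) 2 (gaussianReal 0 y.toNNReal) :=
      (memLp_id_gaussianReal' 2 (by simp)).abs
    have hvar := variance_nonneg (fun x ↦ |x|) (gaussianReal 0 y.toNNReal)
    rw [variance_eq_sub hLp] at hvar
    simp only [Pi.pow_apply, sq_abs, integral_sq_gaussianReal, coe_toNNReal y hy.le] at hvar
    exact le_sqrt_of_sq_le (by linarith)
  have habs (x : ℝ) : |deriv (heatKernel y) x| = y⁻¹ * (|x| * heatKernel y (x - 0)) := by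
    rw [(hasDerivAt_heatKernel hy.le x).deriv, abs_mul, abs_neg, abs_div, abs_of_pos hy,
      abs_of_pos (heatKernel_pos hy x), sub_zero]
    ring
  rw [funext habs, integral_const_mul, integral_mul_heatKernel_sub hy, ← sqrt_div_self,
    div_eq_inv_mul]
  exact mul_le_mul_of_nonneg_left hmoment (inv_nonneg.2 hy.le)

lemma detailSq_le_one {y : ℝ} (hy : 0 < y) (x : ι → ℝ) : detailSq x y ≤ 1 := by
  have hkernel (i : ι) : Integrable fun z ↦ |deriv (heatKernel y) (z - x i)| :=
    ((integrable_deriv_heatKernel hy).comp_sub_right (x i)).abs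
  have hbound : ∫ z, |deriv (gaussianMixture x y) z| ≤ (√y)⁻¹ :=
    calc ∫ z, |deriv (gaussianMixture x y) z|
        ≤ ∫ z, (Fintype.card ι : ℝ)⁻¹ * ∑ i, |deriv (heatKernel y) (z - x i)| := by
          refine integral_mono (integrable_deriv_gaussianMixture hy x).abs
            ((integrable_finsetSum _ fun i _ ↦ hkernel i).const_mul _) fun z ↦ ?_
          simp only [(hasDerivAt_gaussianMixture hy.le x z).deriv, abs_mul, abs_inv, Nat.abs_cast]
          gcongr
          exact Finset.abs_sum_le_sum_abs _ _
      _ = (Fintype.card ι : ℝ)⁻¹ * ∑ i, ∫ z, |deriv (heatKernel y) (z - x i)| := by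
          rw [integral_const_mul, integral_finsetSum _ fun i _ ↦ hkernel i]
      _ ≤ (√y)⁻¹ := inv_card_mul_sum_le fun i ↦ by
          rw [integral_sub_right_eq_self fun z ↦ |deriv (heatKernel y) z|]
          exact integral_abs_deriv_heatKernel_le hy
  calc detailSq x y ≤ y * (√y)⁻¹ ^ 2 := by
        rw [detailSq]
        gcongr
    _ = 1 := by rw [inv_pow, sq_sqrt hy.le, mul_inv_cancel₀ hy.ne']

lemma mul_detailSq_le {y q : ℝ} (hy : 0 < y) (hq : 1 < q) (x : ι → ℝ) :
    (1 - q⁻¹) * detailSq x (y * q) ≤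
      2 * (differentialEntropy (gaussianMixture x (y * q)) -
        differentialEntropy (gaussianMixture x y)) := by
  have hstep : 0 < y * q - y := by nlinarith
  have := mul_sq_integral_abs_deriv_gaussianMixture_le hy hstep x
  rw [add_sub_cancel] at this
  refine le_of_eq_of_le ?_ this
  rw [detailSq]
  field_simp

/-- Pigeonhole over `K` consecutive scales: the entropy increments telescope. -/
lemma exists_lt_mul_detailSq_le {y q : ℝ} (hy : 0 < y) (hq : 1 < q) (x : ι → ℝ) {K : ℕ}
    (hK : 0 < K) :
    ∃ k < K, K * ((1 - q⁻¹) * detailSq x (y * q ^ (k + 1))) ≤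
      2 * (differentialEntropy (gaussianMixture x (y * q ^ K)) -
        differentialEntropy (gaussianMixture x y)) := by
  set H : ℕ → ℝ := fun k ↦ differentialEntropy (gaussianMixture x (y * q ^ k))
  have hsum : ∑ k ∈ Finset.range K, (1 - q⁻¹) * detailSq x (y * q ^ (k + 1)) ≤
      ∑ k ∈ Finset.range K, 2 * (H K - H 0) / K :=
    calc _ ≤ ∑ k ∈ Finset.range K, 2 * (H (k + 1) - H k) := by
          refine Finset.sum_le_sum fun k _ ↦ ?_
          have hscale : 0 < y * q ^ k := mul_pos hy (pow_pos (zero_lt_one.trans hq) k)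
          simpa only [H, pow_succ, mul_assoc] using mul_detailSq_le hscale hq x
      _ = 2 * (H K - H 0) := by rw [← Finset.mul_sum, Finset.sum_range_sub]
      _ = _ := by
          rw [Finset.sum_const, Finset.card_range, nsmul_eq_mul,
            mul_div_cancel₀ _ (by exact_mod_cast hK.ne')]
  obtain ⟨k, hk, hle⟩ := Finset.exists_le_of_sum_le (Finset.nonempty_range_iff.2 hK.ne') hsum
  refine ⟨k, Finset.mem_range.1 hk, ?_⟩
  rw [le_div_iff₀' (by exact_mod_cast hK)] at hle
  simpa only [H, pow_zero, mul_one] using hle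

end Detail

section DigitSums

open Filter Asymptotics Topology

/-- The real number `lam` is not a root of a nonzero polynomial with coefficients in
`{-1, 0, 1}`. -/
def IsHeightOneFree (lam : ℝ) : Prop :=
  ∀ Q : Polynomial ℤ, Q ≠ 0 → (∀ n, Q.coeff n = -1 ∨ Q.coeff n = 0 ∨ Q.coeff n = 1) →
    Polynomial.aeval lam Q ≠ 0

/-- The points `∑ₙ ±λⁿ`, `n < m`, carrying the law of the first `m` terms of the random series
defining the Bernoulli convolution. Signs are encoded as units of `ℤ`. -/
def digitSum (lam : ℝ) (m : ℕ) (ε : Fin m → ℤˣ) : ℝ :=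
  ∑ n, ((ε n : ℤ) : ℝ) * lam ^ (n : ℕ)

variable {lam : ℝ} {P : Polynomial ℤ} {m : ℕ}

lemma abs_digitSum_le (hlam : lam ∈ Set.Ioo 0 1) (ε : Fin m → ℤˣ) :
    |digitSum lam m ε| ≤ (1 - lam)⁻¹ := by
  have habs (n : Fin m) : |((ε n : ℤ) : ℝ) * lam ^ (n : ℕ)| = lam ^ (n : ℕ) := by
    rw [abs_mul, abs_of_pos (pow_pos hlam.1 _), ← Int.cast_abs, Int.abs_eq_natAbs,
      Int.units_natAbs, Nat.cast_one, Int.cast_one, one_mul]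
  refine (Finset.abs_sum_le_sum_abs _ _).trans ?_
  rw [Finset.sum_congr rfl fun n _ ↦ habs n, Fin.sum_univ_eq_sum_range (fun n ↦ lam ^ n) m,
    ← tsum_geometric_of_lt_one hlam.1.le hlam.2]
  exact (summable_geometric_of_lt_one hlam.1.le hlam.2).sum_le_tsum _
    fun n _ ↦ pow_nonneg hlam.1.le n

lemma exists_aeval_eq_digitSum_sub {ε ε' : Fin m → ℤˣ} (hne : ε ≠ ε') :
    ∃ Q : Polynomial ℤ, Q ≠ 0 ∧ Q.natDegree < m ∧
      (∀ n, Q.coeff n = -1 ∨ Q.coeff n = 0 ∨ Q.coeff n = 1) ∧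
      ∀ lam, digitSum lam m ε - digitSum lam m ε' = 2 * Polynomial.aeval lam Q := by
  have hhalf (n) : ∃ c : ℤ, (c = -1 ∨ c = 0 ∨ c = 1) ∧ (ε n : ℤ) - ε' n = 2 * c := by
    rcases Int.units_eq_one_or (ε n) with h | h <;>
      rcases Int.units_eq_one_or (ε' n) with h' | h' <;> simp only [h, h']
    exacts [⟨0, by simp⟩, ⟨1, by simp⟩, ⟨-1, by simp⟩, ⟨0, by simp⟩]
  choose c hc hεc using hhalf
  have hm : 1 ≤ m := Nat.one_le_iff_ne_zero.2 <| by
    rintro rfl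
    exact hne (Subsingleton.elim _ _)
  refine ⟨Polynomial.ofFn m c, fun h ↦ hne ?_, Polynomial.ofFn_natDegree_lt hm c, fun n ↦ ?_,
    fun lam ↦ ?_⟩
  · have hc0 : c = 0 := Polynomial.injective_ofFn m (by rw [h, Polynomial.ofFn_zero])
    ext n
    rw [← sub_eq_zero, hεc, hc0, Pi.zero_apply, mul_zero]
  · rcases lt_or_ge n m with hn | hn
    · simpa only [Polynomial.ofFn_coeff_eq_val_of_lt c hn] using hc ⟨n, hn⟩
    · exact .inr (.inl (Polynomial.ofFn_coeff_eq_zero_of_ge c hn))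
  · have hcast (n) : ((ε n : ℤ) : ℝ) - (ε' n : ℤ) = 2 * c n := by exact_mod_cast hεc n
    simp only [digitSum, ← Finset.sum_sub_distrib, ← sub_mul, hcast, mul_assoc,
      Polynomial.ofFn_eq_sum_monomial, map_sum, Polynomial.aeval_monomial, algebraMap_int_eq,
      eq_intCast, ← Finset.mul_sum]

lemma inv_le_abs_digitSum_sub (hirr : Irreducible P) (hroot : Polynomial.aeval lam P = 0)
    (hpm : IsHeightOneFree lam) {ε ε' : Fin m → ℤˣ} (hne : ε ≠ ε') :
    (mahlerMeasure P ^ m * (m : ℝ) ^ (P.natDegree - 1))⁻¹ ≤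
      |digitSum lam m ε - digitSum lam m ε'| := by
  obtain ⟨Q, hQ0, hdeg, hQ, hsub⟩ := exists_aeval_eq_digitSum_sub hne
  have hM := one_le_mahlerMeasure hirr.ne_zero
  have hm : (0 : ℝ) < m := by exact_mod_cast (Nat.zero_le _).trans_lt hdeg
  have hroot' : (lam : ℂ) ∈ P.aroots ℂ := by
    rw [Polynomial.mem_aroots, ← Complex.coe_algebraMap, Polynomial.aeval_algebraMap_apply, hroot,
      map_zero]
    exact ⟨hirr.ne_zero, rfl⟩
  have hcoeff (k) : |(Q.coeff k : ℝ)| ≤ 1 := by rcases hQ k with h | h | h <;> simp [h]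
  have hsep := one_le_norm_aeval_mul_mahlerMeasure_pow
    (isCoprime_map_of_irreducible_of_aeval_ne_zero hirr hroot (hpm Q hQ0 hQ)) hroot' hcoeff
  rw [← Complex.coe_algebraMap, Polynomial.aeval_algebraMap_apply, norm_algebraMap',
    norm_eq_abs, mul_one] at hsep
  rw [hsub, abs_mul, abs_two, inv_le_iff_one_le_mul₀ (by positivity)]
  have hdeg' : (Q.natDegree + 1 : ℝ) ≤ m := by exact_mod_cast hdeg
  calc (1 : ℝ) ≤ |Polynomial.aeval lam Q| *
        (mahlerMeasure P ^ Q.natDegree * (Q.natDegree + 1) ^ (P.natDegree - 1)) := hsep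
    _ ≤ 2 * |Polynomial.aeval lam Q| * (mahlerMeasure P ^ m * m ^ (P.natDegree - 1)) := by
        gcongr
        linarith [abs_nonneg (Polynomial.aeval lam Q)]

lemma le_differentialEntropy_digitSum (hirr : Irreducible P)
    (hroot : Polynomial.aeval lam P = 0) (hpm : IsHeightOneFree lam) (hm : 0 < m) {y : ℝ}
    (hy : (mahlerMeasure P ^ (2 * m))⁻¹ ≤ y) :
    m * (log 2 - log (mahlerMeasure P)) -
        ((P.natDegree - 1 : ℕ) * log m + log (8 * m) / 2 + log 2) ≤
      differentialEntropy (gaussianMixture (digitSum lam m) y) := by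
  have hM := one_le_mahlerMeasure hirr.ne_zero
  have hm1 : (1 : ℝ) ≤ m := by exact_mod_cast hm
  set r := (mahlerMeasure P ^ m * (m : ℝ) ^ (P.natDegree - 1))⁻¹ with hr
  have hr0 : 0 < r := by positivity
  -- the scale at which the separation bound beats the `2 ^ m` points
  set y₀ := r ^ 2 / (8 * m) with hy₀
  have hy₀_pos : 0 < y₀ := by positivity
  have hcard : (Fintype.card (Fin m → ℤˣ) : ℝ) = 2 ^ m := by simp
  have hseparated : (Fintype.card (Fin m → ℤˣ) : ℝ) * exp (-(r ^ 2 / (8 * y₀))) ≤ 1 := by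
    have hexponent : r ^ 2 / (8 * y₀) = m := by
      rw [hy₀]
      field_simp
    rw [hexponent, hcard, exp_neg, mul_inv_le_iff₀ (exp_pos _), one_mul, ← exp_one_pow]
    exact pow_le_pow_left₀ zero_le_two (by linarith [add_one_le_exp 1]) m
  have hlower := le_differentialEntropy_gaussianMixture_of_separated hy₀_pos hr0.le
    (fun _ _ hne ↦ inv_le_abs_digitSum_sub hirr hroot hpm hne) hseparated
  have hy₀y : y₀ ≤ y :=
    calc y₀ ≤ r ^ 2 := div_le_self (sq_nonneg r) (by linarith)
      _ ≤ ((mahlerMeasure P ^ m)⁻¹) ^ 2 := by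
          rw [hr]
          gcongr
          exact le_mul_of_one_le_right (by positivity) (one_le_pow₀ hm1)
      _ = (mahlerMeasure P ^ (2 * m))⁻¹ := by rw [inv_pow, ← pow_mul, mul_comm m]
      _ ≤ y := hy
  refine le_trans ?_ (hlower.trans <|
    differentialEntropy_gaussianMixture_mono _ hy₀_pos (hy₀_pos.trans_le hy₀y) hy₀y)
  have hlog_y₀ : log y₀ = -2 * (m * log (mahlerMeasure P) + (P.natDegree - 1 : ℕ) * log m) -
      log (8 * m) := by
    rw [hy₀, log_div (by positivity) (by positivity), hr, log_pow, log_inv,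
      log_mul (by positivity) (by positivity), log_pow, log_pow]
    push_cast
    ring
  rw [hcard, log_pow, hlog_y₀]
  linarith

lemma isLittleO_const_add_mul_log (a b c : ℝ) :
    (fun m : ℕ ↦ a + b * log m + log (c * m) / 2) =o[atTop] fun m : ℕ ↦ (m : ℝ) := by
  have hlog : (fun m : ℕ ↦ log (m : ℝ)) =o[atTop] fun m : ℕ ↦ (m : ℝ) :=
    isLittleO_log_id_atTop.comp_tendsto tendsto_natCast_atTop_atTop
  have hconst (a : ℝ) : (fun _ : ℕ ↦ a) =o[atTop] fun m : ℕ ↦ (m : ℝ) :=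
    isLittleO_const_left.2 (.inr (tendsto_norm_atTop_atTop.comp tendsto_natCast_atTop_atTop))
  have hlog' : (fun m : ℕ ↦ log (c * m) / 2) =o[atTop] fun m : ℕ ↦ (m : ℝ) := by
    rcases eq_or_ne c 0 with rfl | hc
    · simp
    refine (((hconst (log c)).add hlog).const_mul_left 2⁻¹).congr' ?_ .rfl
    filter_upwards [eventually_ne_atTop 0] with m hm
    rw [log_mul hc (by exact_mod_cast hm), inv_mul_eq_div]
  exact ((hconst a).add (hlog.const_mul_left b)).add hlog'

lemma eventually_differentialEntropy_digitSum_sub_le (hlam : lam ∈ Set.Ioo 0 1)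
    (hirr : Irreducible P) (hroot : Polynomial.aeval lam P = 0) (hpm : IsHeightOneFree lam)
    {η : ℝ} (hη : 0 < η) :
    ∀ᶠ m : ℕ in atTop, ∀ y ≥ (mahlerMeasure P ^ (2 * m))⁻¹, ∀ y' ∈ Set.Ioc (0 : ℝ) 1,
      differentialEntropy (gaussianMixture (digitSum lam m) y') -
          differentialEntropy (gaussianMixture (digitSum lam m) y) ≤
        m * (log (mahlerMeasure P) - log 2 + η) := by
  have herror := (isLittleO_const_add_mul_log
    (log √(2 * π) + ((1 - lam)⁻¹ ^ 2 + 1) / 2 + log 2) (P.natDegree - 1 : ℕ) 8).def hη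
  filter_upwards [eventually_gt_atTop 0, herror] with m hm herror y hy y' hy'
  have hlower := le_differentialEntropy_digitSum hirr hroot hpm hm hy
  have hupper := (differentialEntropy_gaussianMixture_mono _ hy'.1 (Set.mem_Ioi.2 one_pos)
    hy'.2).trans (differentialEntropy_gaussianMixture_le one_pos (abs_digitSum_le (m := m) hlam))
  rw [norm_eq_abs, norm_eq_abs, Nat.abs_cast] at herror
  linarith [(le_abs_self _).trans herror]

lemma log_two_le_log_mahlerMeasure (hlam : lam ∈ Set.Ioo 0 1) (hirr : Irreducible P)
    (hroot : Polynomial.aeval lam P = 0) (hpm : IsHeightOneFree lam) :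
    log 2 ≤ log (mahlerMeasure P) := by
  refine le_of_forall_pos_le_add fun η hη ↦ ?_
  obtain ⟨m, hm, hgain⟩ := ((eventually_gt_atTop 0).and
    (eventually_differentialEntropy_digitSum_sub_le hlam hirr hroot hpm hη)).exists
  have hone := hgain 1 (inv_le_one_of_one_le₀
    (one_le_pow₀ (one_le_mahlerMeasure hirr.ne_zero))) 1 ⟨one_pos, le_rfl⟩
  rw [sub_self] at hone
  linarith [nonneg_of_mul_nonneg_right hone (by exact_mod_cast hm)]

end DigitSums

section FourierMultiplier

/-- The exponential sum `x ↦ ∑ ξ, c ξ * exp (i ξ x)` with finitely supported coefficients. -/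
noncomputable def expSum (c : ℝ →₀ ℂ) (x : ℝ) : ℂ :=
  Finsupp.linearCombination ℂ (fun ξ : ℝ ↦ Complex.exp (ξ * x * Complex.I)) c

/-- The function `a` multiplies Fourier coefficients of exponential sums with operator norm at most
`A` for the sup norm. -/
def IsFourierMultiplier (a : ℝ → ℂ) (A : ℝ) : Prop :=
  ∀ (c : ℝ →₀ ℂ) (B : ℝ), (∀ x, ‖expSum c x‖ ≤ B) → ∀ x, ‖expSum (a • c) x‖ ≤ A * B

lemma expSum_apply (c : ℝ →₀ ℂ) (x : ℝ) :
    expSum c x = c.sum fun ξ z ↦ z * Complex.exp (ξ * x * Complex.I) :=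
  Finsupp.linearCombination_apply ℂ c

lemma expSum_smul (a : ℝ → ℂ) (c : ℝ →₀ ℂ) (x : ℝ) :
    expSum (a • c) x = c.sum fun ξ z ↦ a ξ * z * Complex.exp (ξ * x * Complex.I) := by
  have hsupport : (a • c).support ⊆ c.support := fun ξ hξ ↦ by
    rw [Finsupp.mem_support_iff, Finsupp.coe_pointwise_smul, Pi.smul_apply'] at hξ
    exact Finsupp.mem_support_iff.2 (right_ne_zero_of_smul hξ)
  rw [expSum_apply]
  exact Finsupp.sum_of_support_subset _ hsupport _ fun _ _ ↦ zero_mul _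

namespace IsFourierMultiplier

variable {a b : ℝ → ℂ} {A B : ℝ}

lemma one : IsFourierMultiplier 1 1 := fun c B hB x ↦ by
  rw [one_smul, one_mul]
  exact hB x

lemma mul (ha : IsFourierMultiplier a A) (hb : IsFourierMultiplier b B) :
    IsFourierMultiplier (a * b) (A * B) := fun c C hC x ↦ by
  rw [mul_smul, mul_assoc]
  exact ha _ _ (hb c C hC) x

lemma prod {ι : Type*} {T : Finset ι} {a : ι → ℝ → ℂ} {A : ι → ℝ}
    (h : ∀ i ∈ T, IsFourierMultiplier (a i) (A i)) :
    IsFourierMultiplier (∏ i ∈ T, a i) (∏ i ∈ T, A i) := by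
  classical
  induction T using Finset.induction_on with
  | empty => exact one
  | insert i T hi ih =>
    rw [Finset.forall_mem_insert] at h
    simpa only [Finset.prod_insert hi] using h.1.mul (ih h.2)

lemma mono (ha : IsFourierMultiplier a A) (hAB : A ≤ B) : IsFourierMultiplier a B :=
  fun c C hC x ↦ (ha c C hC x).trans <|
    mul_le_mul_of_nonneg_right hAB ((norm_nonneg _).trans (hC 0))

lemma const_mul (ha : IsFourierMultiplier a A) (k : ℂ) :
    IsFourierMultiplier (fun ξ ↦ k * a ξ) (‖k‖ * A) := fun c C hC x ↦ by
  have hsmul : (fun ξ ↦ k * a ξ) • c = k • (a • c) := by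
    ext ξ
    simp [mul_assoc]
  rw [hsmul, expSum, map_smul, norm_smul, mul_assoc]
  exact mul_le_mul_of_nonneg_left (ha c C hC x) (norm_nonneg k)

lemma comp_mul_left (ha : IsFourierMultiplier a A) {r : ℝ} (hr : r ≠ 0) :
    IsFourierMultiplier (fun ξ ↦ a (r * ξ)) A := fun c C hC x ↦ by
  have hmap (c : ℝ →₀ ℂ) (x : ℝ) : expSum (c.mapDomain (r * ·)) x = expSum c (r * x) := by
    rw [expSum, expSum, Finsupp.linearCombination_mapDomain]
    congr 2 with ξ
    simp only [Function.comp_apply]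
    push_cast
    ring_nf
  have hsmul : a • c.mapDomain (r * ·) = ((fun ξ ↦ a (r * ξ)) • c).mapDomain (r * ·) := by
    ext ξ
    obtain ⟨ζ, rfl⟩ := mul_left_surjective₀ hr ξ
    have hinj := mul_right_injective₀ hr
    rw [Finsupp.coe_pointwise_smul, Pi.smul_apply', Finsupp.mapDomain_apply hinj,
      Finsupp.mapDomain_apply hinj]
    rfl
  have := ha (c.mapDomain (r * ·)) C (fun x ↦ (hmap c x).symm ▸ hC (r * x)) (x / r)
  rwa [hsmul, hmap, mul_div_cancel₀ _ hr] at this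

end IsFourierMultiplier

lemma isFourierMultiplier_integral {ν : Measure ℝ} {f : ℝ → ℝ} (hf : Integrable f ν) :
    IsFourierMultiplier (fun ξ ↦ ∫ t, f t • Complex.exp (ξ * t * Complex.I) ∂ν)
      (∫ t, |f t| ∂ν) := fun c B hB x ↦ by
  have htranslate : expSum ((fun ξ : ℝ ↦ ∫ t, f t • Complex.exp (ξ * t * Complex.I) ∂ν) • c) x =
      ∫ t, f t • expSum c (t + x) ∂ν := by
    rw [expSum_smul]
    simp only [expSum_apply, Finsupp.sum, Finset.smul_sum]
    rw [integral_finsetSum]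
    · refine Finset.sum_congr rfl fun ξ _ ↦ ?_
      rw [mul_assoc, ← integral_mul_const]
      refine integral_congr_ae (ae_of_all _ fun t ↦ ?_)
      push_cast
      rw [mul_add, add_mul, Complex.exp_add, Complex.real_smul, Complex.real_smul]
      ring
    · intro ξ _
      refine ((integrable_smul_cexp hf ξ).const_mul
        (c ξ * Complex.exp (ξ * x * Complex.I))).congr (ae_of_all _ fun t ↦ ?_)
      push_cast
      rw [mul_add, add_mul, Complex.exp_add, Complex.real_smul, Complex.real_smul]
      ring
  rw [htranslate, ← integral_mul_const]
  refine norm_integral_le_of_norm_le (hf.abs.mul_const B) (ae_of_all _ fun t ↦ ?_)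
  rw [norm_smul, norm_eq_abs]
  exact mul_le_mul_of_nonneg_left (hB _) (abs_nonneg _)

lemma isFourierMultiplier_charFun (μ : Measure ℝ) [IsProbabilityMeasure μ] :
    IsFourierMultiplier (charFun μ) 1 := by
  have := isFourierMultiplier_integral (integrable_const (μ := μ) (1 : ℝ))
  simpa only [one_smul, ← charFun_apply_real, abs_one, integral_const, probReal_univ] using this

lemma isFourierMultiplier_cos (r : ℝ) : IsFourierMultiplier (fun ξ ↦ (cos (r * ξ) : ℂ)) 1 := by
  have := isFourierMultiplier_integral (ν := .dirac r + .dirac (-r))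
    (integrable_const (2⁻¹ : ℝ))
  convert this using 1
  · ext ξ
    rw [integral_add_measure, integral_dirac, integral_dirac, Complex.ofReal_cos, Complex.cos]
    · simp only [Complex.real_smul]
      push_cast
      ring_nf
    all_goals exact integrable_dirac (by finiteness)
  · rw [integral_const, measureReal_add_apply, probReal_univ, probReal_univ]
    norm_num

lemma isFourierMultiplier_gaussianMixture {ι : Type*} [Fintype ι] {y : ℝ} (hy : 0 < y)
    (x : ι → ℝ) :
    IsFourierMultiplier (fun ξ ↦ ξ * exp (-(y * ξ ^ 2 / 2)) *
      ((Fintype.card ι : ℂ)⁻¹ * ∑ i, Complex.exp (ξ * x i * Complex.I))) √(detailSq x y / y) := by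
  have := (isFourierMultiplier_integral (integrable_deriv_gaussianMixture hy x)).const_mul Complex.I
  convert this using 1
  · ext ξ
    rw [integral_deriv_gaussianMixture_smul_cexp hy]
    linear_combination (ξ * exp (-(y * ξ ^ 2 / 2)) *
      ((Fintype.card ι : ℂ)⁻¹ * ∑ i, Complex.exp (ξ * x i * Complex.I))) * Complex.I_mul_I
  · rw [Complex.norm_I, one_mul, detailSq, mul_div_cancel_left₀ _ hy.ne',
      sqrt_sq (integral_nonneg fun z ↦ abs_nonneg _)]

lemma sum_units_cexp {ι : Type*} [Fintype ι] [DecidableEq ι] (v : ι → ℝ) :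
    ∑ ε : ι → ℤˣ, Complex.exp ((∑ i, ((ε i : ℤ) : ℝ) * v i : ℝ) * Complex.I) =
      ∏ i, (2 * cos (v i) : ℂ) := by
  have hcos (t : ℝ) : (2 * cos t : ℂ) = ∑ e : ℤˣ, Complex.exp (((e : ℤ) * t : ℝ) * Complex.I) := by
    rw [Complex.ofReal_cos, Complex.two_cos, UnitsInt.univ]
    simp
  simp only [hcos, Finset.prod_univ_sum, Fintype.piFinset_univ, ← Complex.exp_sum,
    ← Finset.sum_mul, Complex.ofReal_sum]

lemma inv_card_mul_sum_cexp_digitSum (lam : ℝ) (m : ℕ) (ξ : ℝ) :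
    (Fintype.card (Fin m → ℤˣ) : ℂ)⁻¹ * ∑ ε, Complex.exp (ξ * digitSum lam m ε * Complex.I) =
      ∏ n ∈ Finset.range m, (cos (lam ^ n * ξ) : ℂ) := by
  have hdigits (ε : Fin m → ℤˣ) :
      (ξ * digitSum lam m ε : ℂ) = (∑ n, ((ε n : ℤ) : ℝ) * (lam ^ (n : ℕ) * ξ) : ℝ) := by
    rw [digitSum, ← Complex.ofReal_mul, Finset.mul_sum]
    refine congrArg _ (Finset.sum_congr rfl fun n _ ↦ by ring)
  have hcard : (Fintype.card (Fin m → ℤˣ) : ℂ) = 2 ^ m := by simp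
  simp only [hdigits]
  rw [sum_units_cexp fun n : Fin m ↦ lam ^ (n : ℕ) * ξ, Finset.prod_mul_distrib, hcard,
    Fin.prod_univ_eq_prod_range (fun n ↦ (cos (lam ^ n * ξ) : ℂ)) m, Finset.prod_const,
    Finset.card_univ, Fintype.card_fin, inv_mul_cancel_left₀ (pow_ne_zero m two_ne_zero)]

variable {lam s δ : ℝ}

/-- Rescaling by `lam ^ a` turns the law of `∑ n < m, ±lam ^ n` into that of the block
`∑ a ≤ n < a + m, ±lam ^ n`. -/
lemma isFourierMultiplier_digitBlock (hlam : 0 < lam) {a m : ℕ} (hs : 0 < s)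
    (hδ : detailSq (digitSum lam m) (s / lam ^ (2 * a)) ≤ δ) :
    IsFourierMultiplier (fun ξ ↦ ξ * exp (-(s * ξ ^ 2 / 2)) *
      ∏ n ∈ Finset.Ico a (a + m), (cos (lam ^ n * ξ) : ℂ)) √(δ / s) := by
  have hscale : 0 < lam ^ a := pow_pos hlam a
  have hvar : 0 < s / lam ^ (2 * a) := by positivity
  have hblock := isFourierMultiplier_gaussianMixture hvar (digitSum lam m)
  simp only [inv_card_mul_sum_cexp_digitSum] at hblock
  have hrescaled := (hblock.comp_mul_left hscale.ne').const_mul ((lam ^ a : ℝ) : ℂ)⁻¹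
  have hbound : ‖((lam ^ a : ℝ) : ℂ)⁻¹‖ * √(detailSq (digitSum lam m) (s / lam ^ (2 * a)) /
      (s / lam ^ (2 * a))) ≤ √(δ / s) := by
    rw [norm_inv, Complex.norm_of_nonneg hscale.le, ← sqrt_sq (inv_pos.2 hscale).le,
      ← sqrt_mul (sq_nonneg _)]
    refine sqrt_le_sqrt ?_
    calc _ = detailSq (digitSum lam m) (s / lam ^ (2 * a)) / s := by
          field_simp
          ring
      _ ≤ δ / s := div_le_div_of_nonneg_right hδ hs.le
  convert hrescaled.mono hbound using 2 with ξ
  have hexponent : s / lam ^ (2 * a) * (lam ^ a * ξ) ^ 2 = s * ξ ^ 2 := by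
    field_simp
    ring
  have hprod : ∏ n ∈ Finset.Ico a (a + m), (cos (lam ^ n * ξ) : ℂ) =
      ∏ n ∈ Finset.range m, (cos (lam ^ n * (lam ^ a * ξ)) : ℂ) := by
    rw [Finset.prod_Ico_eq_prod_range, Nat.add_sub_cancel_left]
    refine Finset.prod_congr rfl fun n _ ↦ ?_
    rw [pow_add, mul_comm (lam ^ a), mul_assoc]
  rw [hexponent, hprod, Complex.ofReal_mul (lam ^ a) ξ]
  simp only [mul_assoc]
  rw [inv_mul_cancel_left₀ (Complex.ofReal_ne_zero.2 hscale.ne')]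

lemma eq_prod_cos_mul_of_forall_eq {φ : ℝ → ℂ} (hφ : ∀ ξ, φ ξ = cos ξ * φ (lam * ξ)) (N : ℕ)
    (ξ : ℝ) : φ ξ = (∏ n ∈ Finset.range N, (cos (lam ^ n * ξ) : ℂ)) * φ (lam ^ N * ξ) := by
  induction N with
  | zero => simp
  | succ N ih =>
    rw [ih, hφ (lam ^ N * ξ), Finset.prod_range_succ, mul_assoc, pow_succ', mul_assoc lam]

theorem isFourierMultiplier_pow_mul_exp_mul {ι : Type*} (hlam : 0 < lam) {φ : ℝ → ℂ}
    (hφ : IsFourierMultiplier φ 1) (hself : ∀ ξ, φ ξ = cos ξ * φ (lam * ξ)) {T : Finset ι}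
    {a m : ι → ℕ} (hdisj : (T : Set ι).PairwiseDisjoint fun i ↦ Finset.Ico (a i) (a i + m i))
    (hs : 0 < s) (hδ : ∀ i ∈ T, detailSq (digitSum lam (m i)) (s / lam ^ (2 * a i)) ≤ δ) :
    IsFourierMultiplier (fun ξ ↦ ξ ^ T.card * exp (-(T.card * s * ξ ^ 2 / 2)) * φ ξ)
      (√(δ / s) ^ T.card) := by
  classical
  set U := T.biUnion fun i ↦ Finset.Ico (a i) (a i + m i)
  obtain ⟨N, hN⟩ := U.exists_nat_subset_range
  have hblocks := IsFourierMultiplier.prod fun i hi ↦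
    isFourierMultiplier_digitBlock hlam hs (hδ i hi)
  have hrest := IsFourierMultiplier.prod (T := Finset.range N \ U) fun n _ ↦
    isFourierMultiplier_cos (lam ^ n)
  have htail := hφ.comp_mul_left (pow_pos hlam N).ne'
  convert (hblocks.mul hrest).mul htail using 1
  · ext ξ
    have hexp : (exp (-(T.card * s * ξ ^ 2 / 2)) : ℂ) = exp (-(s * ξ ^ 2 / 2)) ^ T.card := by
      rw [← Complex.ofReal_pow, ← exp_nat_mul]
      ring_nf
    simp only [Pi.mul_apply, Finset.prod_apply, Finset.prod_mul_distrib, Finset.prod_const]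
    rw [eq_prod_cos_mul_of_forall_eq hself N ξ, ← Finset.prod_sdiff hN,
      Finset.prod_biUnion hdisj, hexp]
    ring
  · simp only [Finset.prod_const, one_pow, mul_one]

end FourierMultiplier

section DownwardIntegration

open Filter Topology

variable {E : Type*} [NormedAddCommGroup E] [NormedSpace ℝ E]

lemma norm_sub_le_of_norm_deriv_le {f f' : ℝ → E} {B B' : ℝ → ℝ} {u w : ℝ} (huw : u ≤ w)
    (hf : ∀ t ∈ Set.Icc u w, HasDerivAt f (f' t) t) (hB : ∀ t ∈ Set.Icc u w, HasDerivAt B (B' t) t)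
    (hbound : ∀ t ∈ Set.Ico u w, ‖f' t‖ ≤ B' t) : ‖f w - f u‖ ≤ B w - B u :=
  image_norm_le_of_norm_deriv_right_le_deriv_boundary'
    (fun t ht ↦ ((hf t ht).sub_const (f u)).continuousAt.continuousWithinAt)
    (fun t ht ↦ ((hf t ⟨ht.1, ht.2.le⟩).sub_const (f u)).hasDerivWithinAt) (by simp)
    (fun t ht ↦ ((hB t ht).sub_const (B u)).continuousAt.continuousWithinAt)
    (fun t ht ↦ ((hB t ⟨ht.1, ht.2.le⟩).sub_const (B u)).hasDerivWithinAt) hbound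
    (Set.right_mem_Icc.2 huw)

lemma norm_le_of_norm_deriv_le_inv_pow_add {f f' : ℝ → E} {a c y Y : ℝ} (n : ℕ) (ha : 0 ≤ a)
    (hc : 0 ≤ c) (hy : 0 < y) (hyY : y ≤ Y) (hf : ∀ t, 0 < t → HasDerivAt f (f' t) t)
    (hbound : ∀ t ∈ Set.Ioc 0 Y, ‖f' t‖ ≤ a * (n + 1) / t ^ (n + 2) + c) :
    ‖f y‖ ≤ a / y ^ (n + 1) + (‖f Y‖ + c * Y) := by
  have hmajorant (t : ℝ) (ht : 0 < t) :
      HasDerivAt (fun t : ℝ ↦ c * t - a * (t ^ (n + 1))⁻¹) (a * (n + 1) / t ^ (n + 2) + c) t := by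
    have hinv := (hasDerivAt_pow (n + 1) t).inv (pow_pos ht _).ne'
    refine (((hasDerivAt_id t).const_mul c).sub (hinv.const_mul a)).congr_deriv ?_
    push_cast
    field_simp
    ring
  have hvar := norm_sub_le_of_norm_deriv_le hyY (fun t ht ↦ hf t (hy.trans_le ht.1))
    (fun t ht ↦ hmajorant t (hy.trans_le ht.1)) fun t ht ↦ hbound t ⟨hy.trans_le ht.1, ht.2.le⟩
  have hnorm := norm_le_norm_add_norm_sub (f Y) (f y)
  have hcy : 0 ≤ c * y := by positivity
  have haY : 0 ≤ a * (Y ^ (n + 1))⁻¹ := by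
    have := hy.trans_le hyY
    positivity
  rw [div_eq_mul_inv]
  linarith

variable {G : ℕ → ℝ → E}

/-- Repeated integration from `Y` down to `y`. -/
lemma norm_le_factorial_div_pow_add (hG : ∀ k y, 0 < y → HasDerivAt (G k) (G (k + 1) y) y)
    {A b y Y : ℝ} (hA : 0 ≤ A) (hb : 0 ≤ b) {n i : ℕ} (hy : y ∈ Set.Ioc 0 Y)
    (htop : ∀ t ∈ Set.Ioc 0 Y, ‖G (n + 1 + i) t‖ ≤ A * (n + i).factorial / t ^ (n + 1 + i))
    (hY : ∀ k < n + 1 + i, ‖G k Y‖ ≤ b / Y ^ k) :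
    ‖G (n + 1) y‖ ≤ A * n.factorial / y ^ (n + 1) + i * b / Y ^ (n + 1) := by
  induction i generalizing n y with
  | zero => simpa using htop y hy
  | succ i ih =>
    have hYpos : 0 < Y := hy.1.trans_le hy.2
    have hnext (t) (ht : t ∈ Set.Ioc 0 Y) : ‖G (n + 2) t‖ ≤
        A * n.factorial * (n + 1) / t ^ (n + 2) + i * b / Y ^ (n + 2) := by
      refine (ih ht (n := n + 1) (fun t ht ↦ ?_) fun k hk ↦ hY k (by omega)).trans_eq ?_
      · convert htop t ht using 3 <;> ring_nf
      · rw [Nat.factorial_succ]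
        push_cast
        ring
    refine (norm_le_of_norm_deriv_le_inv_pow_add n (by positivity) (by positivity) hy.1 hy.2
      (hG (n + 1)) hnext).trans ?_
    gcongr
    calc ‖G (n + 1) Y‖ + i * b / Y ^ (n + 2) * Y
        ≤ b / Y ^ (n + 1) + i * b / Y ^ (n + 2) * Y := by
          gcongr
          exact hY _ (by omega)
      _ = (i + 1 : ℕ) * b / Y ^ (n + 1) := by
          push_cast
          field_simp
          ring

lemma succ_mul_pow_div_factorial_le {δ : ℝ} (hδ : 0 ≤ δ) (n : ℕ) :
    ((n + 1 : ℕ) * δ) ^ (n + 1) / n.factorial ≤ (n + 1 : ℕ) * (exp 1 * δ) ^ (n + 1) :=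
  calc ((n + 1 : ℕ) * δ) ^ (n + 1) / n.factorial
      = (n + 1 : ℕ) * δ ^ (n + 1) * (((n + 1 : ℕ) : ℝ) ^ (n + 1) / (n + 1).factorial) := by
        rw [Nat.factorial_succ]
        push_cast
        rw [mul_pow]
        field_simp
    _ ≤ (n + 1 : ℕ) * δ ^ (n + 1) * exp (n + 1 : ℕ) := by
        gcongr
        exact pow_div_factorial_le_exp _ (by positivity) _
    _ = (n + 1 : ℕ) * (exp 1 * δ) ^ (n + 1) := by
        rw [mul_pow, exp_one_pow]
        ring

lemma norm_sub_le_mul_log_sub_log_add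
    (hG : ∀ k y, 0 < y → HasDerivAt (G k) (G (k + 1) y) y)
    (hbound : ∀ k y, 0 < y → ‖G k y‖ ≤ (k / y) ^ k) {n : ℕ} {δ u w Y : ℝ} (hδ : 0 ≤ δ)
    (hsmall : ∀ y ∈ Set.Ioc 0 Y, ‖G (n + 1) y‖ ≤ ((n + 1 : ℕ) * δ / y) ^ (n + 1))
    (hu : 0 < u) (huw : u ≤ w) (hwY : w ≤ Y) :
    ‖G 0 w - G 0 u‖ ≤ (n + 1 : ℕ) * (exp 1 * δ) ^ (n + 1) * (log w - log u) +
      ((n + 1 : ℕ) : ℝ) ^ (n + 2) * (w / Y) := by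
  have hYpos : 0 < Y := (hu.trans_le huw).trans_le hwY
  set j : ℝ := ((n + 1 : ℕ) : ℝ) with hj
  have hj1 : 1 ≤ j := by simp [hj]
  have hY (k) (hk : k < 0 + 1 + n) : ‖G k Y‖ ≤ j ^ (n + 1) / Y ^ k := by
    refine (hbound k Y hYpos).trans ?_
    rw [div_pow]
    gcongr
    calc (k : ℝ) ^ k ≤ j ^ k := by
          gcongr
          exact Nat.cast_le.2 (by omega)
      _ ≤ j ^ (n + 1) := pow_le_pow_right₀ hj1 (by omega)
  have hfirst (y) (hy : y ∈ Set.Ioc 0 Y) :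
      ‖G 1 y‖ ≤ j * (exp 1 * δ) ^ (n + 1) * y⁻¹ + j ^ (n + 2) / Y := by
    have hdown := norm_le_factorial_div_pow_add hG (A := (j * δ) ^ (n + 1) / n.factorial)
      (by positivity) (by positivity) (n := 0) (i := n) hy (fun t ht ↦ ?_) hY
    · refine hdown.trans (add_le_add ?_ ?_)
      · rw [zero_add, pow_one, Nat.factorial_zero, Nat.cast_one, mul_one, div_eq_mul_inv _ y]
        exact mul_le_mul_of_nonneg_right (succ_mul_pow_div_factorial_le hδ n) (inv_pos.2 hy.1).le
      · rw [zero_add, pow_one, pow_succ' j (n + 1)]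
        gcongr
        simp [hj]
    · rw [zero_add, zero_add, add_comm 1, div_mul_cancel₀ _ (by positivity), ← div_pow]
      exact hsmall t ht
  have hmajorant (t : ℝ) (ht : t ∈ Set.Icc u w) :
      HasDerivAt (fun t ↦ j * (exp 1 * δ) ^ (n + 1) * log t + j ^ (n + 2) / Y * t)
        (j * (exp 1 * δ) ^ (n + 1) * t⁻¹ + j ^ (n + 2) / Y) t :=
    (((hasDerivAt_log (hu.trans_le ht.1).ne').const_mul _).add
      ((hasDerivAt_id t).const_mul _)).congr_deriv (by ring)
  have hvar := norm_sub_le_of_norm_deriv_le huw (fun t ht ↦ hG 0 t (hu.trans_le ht.1)) hmajorant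
    fun t ht ↦ hfirst t ⟨hu.trans_le ht.1, ht.2.le.trans hwY⟩
  have hnonneg : 0 ≤ j ^ (n + 2) / Y * u := by positivity
  rw [mul_div_left_comm, mul_comm w]
  linarith

/-- The bound obtained for the variation of a function between the scales `exp (-2 N q ^ j)` and
`exp (-2 N q ^ (j + 1))` when its `j`-th derivative is at most `(j * δ / y) ^ j` for
`y ≤ exp (-N q ^ j)`. -/
noncomputable def scaleVariation (δ N q : ℝ) (j : ℕ) : ℝ :=
  j * (exp 1 * δ) ^ j * (2 * (N * q ^ (j + 1))) + (j : ℝ) ^ (j + 1) * exp (-(N * q ^ j))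

lemma summable_pow_mul_exp_neg_mul_pow {N q : ℝ} (hN : 0 < N) (hq : 1 < q) :
    Summable fun j : ℕ ↦ (j : ℝ) ^ (j + 1) * exp (-(N * q ^ j)) := by
  have hlim := (tendsto_pow_const_div_const_pow_of_one_lt 2 hq).eventually_lt_const
    (show 0 < N / 3 by positivity)
  refine Summable.of_norm_bounded_eventually_nat summable_exp_neg_nat ?_
  filter_upwards [hlim, eventually_ge_atTop 1] with j hj hj1
  have hj1 : (1 : ℝ) ≤ j := by exact_mod_cast hj1
  rw [div_lt_iff₀ (by positivity)] at hj
  have hlog : (j + 1) * log j ≤ (j + 1) * j := by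
    gcongr
    linarith [log_le_sub_one_of_pos (zero_lt_one.trans_le hj1)]
  have hpow : (j : ℝ) ^ (j + 1) = exp ((j + 1) * log j) := by
    rw [mul_comm, exp_mul, exp_log (zero_lt_one.trans_le hj1)]
    exact_mod_cast rfl
  rw [norm_of_nonneg (by positivity), hpow, ← exp_add]
  refine exp_le_exp.2 ?_
  nlinarith

lemma summable_scaleVariation {δ N q : ℝ} (hδ : 0 ≤ δ) (hN : 0 < N) (hq : 1 < q)
    (hδq : exp 1 * δ * q < 1) : Summable (scaleVariation δ N q) := by
  refine Summable.add ?_ (summable_pow_mul_exp_neg_mul_pow hN hq)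
  have hratio : ‖exp 1 * δ * q‖ < 1 := by rwa [norm_of_nonneg (by positivity)]
  refine ((summable_pow_mul_geometric_of_norm_lt_one 1 hratio).mul_left (2 * N * q)).congr
    fun j ↦ ?_
  rw [mul_pow, pow_one]
  ring

theorem exists_forall_norm_sub_le {δ N q : ℝ} (hδ : 0 ≤ δ) (hN : 0 < N) (hq : 1 < q)
    (hδq : exp 1 * δ * q < 1) {ε : ℝ} (hε : 0 < ε) :
    ∃ y > 0, ∀ G : ℕ → ℝ → E, (∀ k y, 0 < y → HasDerivAt (G k) (G (k + 1) y) y) →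
      (∀ k y, 0 < y → ‖G k y‖ ≤ (k / y) ^ k) →
      (∀ j > 0, ∀ y ∈ Set.Ioc 0 (exp (-(N * q ^ j))), ‖G j y‖ ≤ (j * δ / y) ^ j) →
      ∀ L, Tendsto (G 0) (𝓝[>] 0) (𝓝 L) → ‖G 0 y - L‖ ≤ ε := by
  have hsum := (summable_nat_add_iff 1).2 (summable_scaleVariation hδ hN hq hδq)
  obtain ⟨n, hn⟩ :=
    ((tendsto_sum_nat_add fun j ↦ scaleVariation δ N q (j + 1)).eventually_le_const hε).exists
  refine ⟨exp (-(2 * (N * q ^ (n + 1)))), exp_pos _, fun G hG hbound hsmall L hL ↦ ?_⟩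
  have hstep (j : ℕ) : dist (G 0 (exp (-(2 * (N * q ^ (j + 1))))))
      (G 0 (exp (-(2 * (N * q ^ (j + 2)))))) ≤ scaleVariation δ N q (j + 1) := by
    have hNq : 0 ≤ N * q ^ (j + 1) := by positivity
    have hmono : N * q ^ (j + 1) ≤ N * q ^ (j + 2) := by
      gcongr
      exacts [hq.le, by omega]
    rw [dist_eq_norm, scaleVariation]
    refine (norm_sub_le_mul_log_sub_log_add hG hbound hδ (hsmall (j + 1) j.succ_pos) (exp_pos _)
      (exp_le_exp.2 (by linarith)) (exp_le_exp.2 (by linarith))).trans ?_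
    rw [log_exp, log_exp, ← exp_sub]
    gcongr <;> linarith
  have hlim : Tendsto (fun j : ℕ ↦ exp (-(2 * (N * q ^ (j + 1))))) atTop (𝓝[>] 0) := by
    refine tendsto_nhdsWithin_iff.2 ⟨tendsto_exp_neg_atTop_nhds_zero.comp ?_,
      .of_forall fun j ↦ exp_pos _⟩
    exact ((((tendsto_pow_atTop_atTop_of_one_lt hq).comp (tendsto_add_atTop_nat 1)).const_mul_atTop
      hN).const_mul_atTop two_pos)
  rw [← dist_eq_norm]
  refine (dist_le_tsum_of_dist_le_of_tendsto _ hstep hsum (hL.comp hlim) n).trans ?_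
  simpa only [add_comm n] using hn

end DownwardIntegration

section AbsoluteContinuity

lemma integral_expSum (μ : Measure ℝ) [IsFiniteMeasure μ] (c : ℝ →₀ ℂ) :
    ∫ x, expSum c x ∂μ = expSum (charFun μ • c) 0 := by
  have hint (ξ : ℝ) : Integrable (fun x : ℝ ↦ c ξ * Complex.exp (ξ * x * Complex.I)) μ := by
    refine .const_mul (.of_bound (by fun_prop) 1 (.of_forall fun x ↦ ?_)) _
    rw [← Complex.ofReal_mul, Complex.norm_exp_ofReal_mul_I]
  simp only [expSum_apply c, Finsupp.sum, expSum_smul]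
  rw [integral_finsetSum _ fun ξ _ ↦ hint ξ]
  refine Finset.sum_congr rfl fun ξ _ ↦ ?_
  rw [integral_const_mul, ← charFun_apply_real]
  simp [mul_comm]

lemma measureReal_le_add_of_forall_integral_le {Ω : Type*} [TopologicalSpace Ω]
    [HasOuterApproxClosed Ω] [MeasurableSpace Ω] [OpensMeasurableSpace Ω] {μ ν : Measure Ω}
    [IsFiniteMeasure μ] [IsFiniteMeasure ν] {ε : ℝ}
    (h : ∀ ψ : C(Ω, ℝ), (∀ x, ψ x ∈ Set.Icc 0 1) → ∫ x, ψ x ∂μ ≤ ∫ x, ψ x ∂ν + ε)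
    {F : Set Ω} (hF : IsClosed F) : μ.real F ≤ ν.real F + ε := by
  let ψ (n : ℕ) : C(Ω, ℝ) := ⟨fun x ↦ hF.apprSeq n x, by fun_prop⟩
  have hψ (n : ℕ) (x : Ω) : ψ n x ∈ Set.Icc 0 1 :=
    ⟨NNReal.coe_nonneg _, mod_cast HasOuterApproxClosed.apprSeq_apply_le_one hF n x⟩
  have htendsto (ρ : Measure Ω) [IsFiniteMeasure ρ] :
      Filter.Tendsto (fun n ↦ ∫ x, ψ n x ∂ρ) Filter.atTop (nhds (ρ.real F)) := by
    refine ((ENNReal.tendsto_toReal (measure_ne_top ρ F)).comp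
      (HasOuterApproxClosed.tendsto_lintegral_apprSeq hF ρ)).congr fun n ↦ ?_
    rw [integral_eq_lintegral_of_nonneg_ae (.of_forall fun x ↦ (hψ n x).1)
      (ψ n).continuous.aestronglyMeasurable]
    simp [ψ]
  exact le_of_tendsto_of_tendsto' (htendsto μ) ((htendsto ν).add_const ε) fun n ↦ h _ (hψ n)

lemma measure_preimage_image_mk_eq_zero {G : Type*} [AddGroup G] [MeasurableSpace G]
    [MeasurableAdd G] {μ : Measure G} [μ.IsAddRightInvariant] (Γ : AddSubgroup G) [Countable Γ]
    {s : Set G} (hs : μ s = 0) :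
    μ (QuotientAddGroup.mk (s := Γ) ⁻¹' (QuotientAddGroup.mk '' s)) = 0 := by
  rw [QuotientAddGroup.preimage_image_mk, measure_iUnion_null_iff]
  exact fun γ ↦ (measure_preimage_add_right μ γ s).trans hs

lemma continuous_integral_continuousMap {X : Type*} [TopologicalSpace X] [CompactSpace X]
    [MeasurableSpace X] [BorelSpace X] (μ : Measure X) [IsFiniteMeasure μ] :
    Continuous fun ψ : C(X, ℂ) ↦ ∫ x, ψ x ∂μ :=
  (continuous_integral.comp (ContinuousMap.toLp (E := ℂ) 1 μ ℂ).continuous).congr fun ψ ↦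
    integral_congr_ae (ContinuousMap.coeFn_toLp μ ψ)

section Circle

variable {T : ℝ}

lemma exists_expSum_eq_of_mem_span_fourier {g : C(AddCircle T, ℂ)}
    (hg : g ∈ Submodule.span ℂ (Set.range (fourier (T := T)))) :
    ∃ c, ∀ x : ℝ, g x = expSum c x := by
  obtain ⟨c, rfl⟩ := Finsupp.mem_span_range_iff_exists_finsupp.1 hg
  refine ⟨c.mapDomain fun n : ℤ ↦ 2 * π * n / T, fun x ↦ ?_⟩
  rw [expSum, Finsupp.linearCombination_mapDomain, Finsupp.linearCombination_apply, Finsupp.sum,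
    Finsupp.sum, ContinuousMap.sum_apply]
  refine Finset.sum_congr rfl fun n _ ↦ ?_
  rw [ContinuousMap.smul_apply, fourier_coe_apply, Function.comp_apply]
  congr 2
  push_cast
  ring

variable [Fact (0 < T)]

lemma norm_integral_sub_le_of_forall_expSum {μ ν : Measure ℝ} [IsFiniteMeasure μ]
    [IsFiniteMeasure ν] {ε : ℝ}
    (h : ∀ c, (∀ x, ‖expSum c x‖ ≤ 1) → ‖∫ x, expSum c x ∂μ - ∫ x, expSum c x ∂ν‖ ≤ ε)
    {ψ : C(AddCircle T, ℂ)} (hψ : ‖ψ‖ ≤ 1) :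
    ‖∫ x : ℝ, ψ x ∂μ - ∫ x : ℝ, ψ x ∂ν‖ ≤ ε := by
  have hcont (ρ : Measure ℝ) [IsFiniteMeasure ρ] :
      Continuous fun ψ : C(AddCircle T, ℂ) ↦ ∫ x : ℝ, ψ x ∂ρ :=
    (continuous_integral_continuousMap (ρ.map (↑))).congr fun ψ ↦
      integral_map (AddCircle.continuous_mk' T).aemeasurable
        ψ.continuous.aestronglyMeasurable
  have hdense : Dense (Submodule.span ℂ (Set.range (fourier (T := T))) : Set C(AddCircle T, ℂ)) :=
    Submodule.dense_iff_topologicalClosure_eq_top.2 span_fourier_closure_eq_top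
  have hclosure : Metric.closedBall (0 : C(AddCircle T, ℂ)) 1 ⊆
      closure (Metric.ball 0 1 ∩ Submodule.span ℂ (Set.range (fourier (T := T)))) := by
    rw [← closure_ball _ one_ne_zero]
    exact closure_minimal (hdense.open_subset_closure_inter Metric.isOpen_ball) isClosed_closure
  refine closure_minimal ?_ (isClosed_le ((hcont μ).sub (hcont ν)).norm continuous_const)
    (hclosure (mem_closedBall_zero_iff.2 hψ))
  rintro g ⟨hg, hgspan⟩
  obtain ⟨c, hc⟩ := exists_expSum_eq_of_mem_span_fourier hgspan
  change ‖∫ x : ℝ, g x ∂μ - ∫ x : ℝ, g x ∂ν‖ ≤ ε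
  simp only [hc]
  exact h c fun x ↦ hc x ▸ (g.norm_coe_le_norm x).trans (mem_ball_zero_iff.1 hg).le

lemma measureReal_le_of_forall_expSum {μ ν : Measure ℝ} [IsFiniteMeasure μ]
    [IsFiniteMeasure ν] {ε : ℝ} (hν : ν ≪ volume)
    (h : ∀ c, (∀ x, ‖expSum c x‖ ≤ 1) → ‖∫ x, expSum c x ∂μ - ∫ x, expSum c x ∂ν‖ ≤ ε)
    {K : Set ℝ} (hK : IsCompact K) (hK0 : volume K = 0) : μ.real K ≤ ε := by
  let q : ℝ → AddCircle (1 : ℝ) := (↑)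
  have hq : Continuous q := AddCircle.continuous_mk' 1
  have hF : IsClosed (q '' K) := (hK.image hq).isClosed
  have hreal (ρ : Measure ℝ) (s : Set (AddCircle (1 : ℝ))) (hs : IsClosed s) :
      (ρ.map q).real s = ρ.real (q ⁻¹' s) := map_measureReal_apply hq.measurable hs.measurableSet
  have hνF : ν.real (q ⁻¹' (q '' K)) = 0 := by
    rw [measureReal_def, hν (measure_preimage_image_mk_eq_zero _ hK0), ENNReal.toReal_zero]
  have hμF : (μ.map q).real (q '' K) ≤ (ν.map q).real (q '' K) + ε := by
    refine measureReal_le_add_of_forall_integral_le (fun ψ hψ ↦ ?_) hF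
    let ψ' : C(AddCircle (1 : ℝ), ℂ) := ⟨fun x ↦ ψ x, by fun_prop⟩
    have hψ' : ‖ψ'‖ ≤ 1 := (ContinuousMap.norm_le _ zero_le_one).2 fun x ↦ by
      simpa [ψ', abs_of_nonneg (hψ x).1] using (hψ x).2
    have hle := norm_integral_sub_le_of_forall_expSum h hψ'
    simp only [ψ', ContinuousMap.coe_mk, integral_complex_ofReal, ← Complex.ofReal_sub,
      Complex.norm_real] at hle
    rw [integral_map hq.aemeasurable ψ.continuous.aestronglyMeasurable,
      integral_map hq.aemeasurable ψ.continuous.aestronglyMeasurable]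
    linarith [le_of_abs_le hle]
  rw [hreal μ _ hF, hreal ν _ hF, hνF, zero_add] at hμF
  exact (measureReal_mono (Set.subset_preimage_image q K)).trans hμF

end Circle

lemma absolutelyContinuous_of_forall_exists_expSum {μ : Measure ℝ} [IsFiniteMeasure μ]
    (h : ∀ ε > 0, ∃ ν : Measure ℝ, IsFiniteMeasure ν ∧ ν ≪ volume ∧
      ∀ c, (∀ x, ‖expSum c x‖ ≤ 1) → ‖∫ x, expSum c x ∂μ - ∫ x, expSum c x ∂ν‖ ≤ ε) :
    μ ≪ volume := by
  refine .mk fun s hs hs0 ↦ by_contra fun hne ↦ ?_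
  obtain ⟨K, hKs, hK, hlt⟩ := hs.exists_lt_isCompact (pos_iff_ne_zero.2 hne)
  have hpos : 0 < μ.real K := ENNReal.toReal_pos hlt.ne' (measure_ne_top μ K)
  obtain ⟨ν, _, hν, hclose⟩ := h (μ.real K / 2) (half_pos hpos)
  linarith [measureReal_le_of_forall_expSum hν hclose hK (measure_mono_null hKs hs0)]

lemma charFun_conv_gaussianReal {μ : Measure ℝ} [IsFiniteMeasure μ] {y : ℝ} (hy : 0 ≤ y) (ξ : ℝ) :
    charFun (μ ∗ gaussianReal 0 y.toNNReal) ξ = exp (-(y * ξ ^ 2 / 2)) * charFun μ ξ := by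
  rw [charFun_conv, charFun_gaussianReal, Real.coe_toNNReal y hy, mul_comm]
  simp

theorem absolutelyContinuous_of_forall_exists_gaussian {μ : Measure ℝ} [IsProbabilityMeasure μ]
    (h : ∀ ε > 0, ∃ y : ℝ, 0 < y ∧ ∀ c : ℝ →₀ ℂ, (∀ x, ‖expSum c x‖ ≤ 1) →
      ‖expSum ((fun ξ ↦ exp (-(y * ξ ^ 2 / 2)) * charFun μ ξ) • c) 0 -
        expSum (charFun μ • c) 0‖ ≤ ε) : μ ≪ volume := by
  refine absolutelyContinuous_of_forall_exists_expSum fun ε hε ↦ ?_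
  obtain ⟨y, hy, hclose⟩ := h ε hε
  refine ⟨μ ∗ gaussianReal 0 y.toNNReal, inferInstance, Measure.conv_absolutelyContinuous
    (gaussianReal_absolutelyContinuous 0 (Real.toNNReal_pos.2 hy).ne'), fun c hc ↦ ?_⟩
  rw [integral_expSum, integral_expSum, norm_sub_rev, funext (charFun_conv_gaussianReal hy.le)]
  exact hclose c hc

end AbsoluteContinuity

section BernoulliConvolution

/-- The sign encoding the binary digit of `x` of weight `2 ^ (-(n + 1))`. -/
noncomputable def binarySign (n : ℕ) (x : ℝ) : ℝ := if ⌊x * 2 ^ (n + 1)⌋ % 2 = 1 then 1 else -1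

/-- The random variable on `[0, 1)` whose law is the Bernoulli convolution. -/
noncomputable def binarySignSeries (lam x : ℝ) : ℝ := ∑' n, binarySign n x * lam ^ n

lemma measurable_binarySign (n : ℕ) : Measurable (binarySign n) := by
  have hfloor : Measurable fun x : ℝ ↦ ⌊x * 2 ^ (n + 1)⌋ :=
    Int.measurable_floor.comp (measurable_id.mul_const _)
  exact .ite (hfloor (.of_discrete (s := {k : ℤ | k % 2 = 1}))) measurable_const measurable_const

lemma abs_binarySign (n : ℕ) (x : ℝ) : |binarySign n x| = 1 := by
  rw [binarySign]
  split_ifs <;> simp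

lemma binarySign_zero_half {u : ℝ} (hu : u ∈ Set.Ico (0 : ℝ) 1) : binarySign 0 (u / 2) = -1 := by
  have : ⌊u⌋ = 0 := Int.floor_eq_zero_iff.2 hu
  simp [binarySign, this]

lemma binarySign_zero_half_add_half {u : ℝ} (hu : u ∈ Set.Ico (0 : ℝ) 1) :
    binarySign 0 (u / 2 + 1 / 2) = 1 := by
  have : ⌊u⌋ = 0 := Int.floor_eq_zero_iff.2 hu
  simp [binarySign, add_mul, this]

lemma binarySign_succ_half (n : ℕ) (u : ℝ) : binarySign (n + 1) (u / 2) = binarySign n u := by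
  have : u / 2 * 2 ^ (n + 1 + 1) = u * 2 ^ (n + 1) := by ring
  rw [binarySign, this, binarySign]

lemma binarySign_succ_half_add_half (n : ℕ) (u : ℝ) :
    binarySign (n + 1) (u / 2 + 1 / 2) = binarySign n u := by
  have : (u / 2 + 1 / 2) * 2 ^ (n + 1 + 1) = u * 2 ^ (n + 1) + (2 * 2 ^ n : ℤ) := by
    push_cast
    ring
  rw [binarySign, this, Int.floor_add_intCast, Int.add_mul_emod_self_left, binarySign]

variable {lam : ℝ}

lemma summable_binarySign_mul_pow (hlam : |lam| < 1) (x : ℝ) :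
    Summable fun n ↦ binarySign n x * lam ^ n :=
  .of_norm_bounded (summable_geometric_of_lt_one (abs_nonneg lam) hlam) fun n ↦ by
    rw [norm_eq_abs, abs_mul, abs_binarySign, one_mul, abs_pow]

lemma measurable_binarySignSeries (hlam : |lam| < 1) : Measurable (binarySignSeries lam) :=
  measurable_of_tendsto_metrizable
    (fun N ↦ Finset.measurable_fun_sum (Finset.range N) fun n _ ↦
      (measurable_binarySign n).mul_const (lam ^ n))
    (tendsto_pi_nhds.2 fun x ↦ (summable_binarySign_mul_pow hlam x).hasSum.tendsto_sum_nat)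

lemma binarySignSeries_eq_add_mul (hlam : |lam| < 1) {x u : ℝ}
    (h : ∀ n, binarySign (n + 1) x = binarySign n u) :
    binarySignSeries lam x = binarySign 0 x + lam * binarySignSeries lam u := by
  rw [binarySignSeries, (summable_binarySign_mul_pow hlam x).tsum_eq_zero_add, pow_zero, mul_one,
    binarySignSeries, ← tsum_mul_left]
  congr! 3 with n
  rw [h]
  ring

lemma isProbabilityMeasure_bernoulliConv (hlam : |lam| < 1) :
    IsProbabilityMeasure (bernoulliConv lam) := by
  have : IsProbabilityMeasure (volume.restrict (Set.Ico (0 : ℝ) 1)) := ⟨by simp⟩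
  exact Measure.isProbabilityMeasure_map (measurable_binarySignSeries hlam).aemeasurable

lemma charFun_bernoulliConv_eq_integral (hlam : |lam| < 1) (ξ : ℝ) :
    charFun (bernoulliConv lam) ξ =
      ∫ x in (0 : ℝ)..1, Complex.exp (ξ * binarySignSeries lam x * Complex.I) := by
  rw [charFun_apply_real, intervalIntegral.integral_of_le zero_le_one,
    ← integral_Ico_eq_integral_Ioc]
  exact integral_map (measurable_binarySignSeries hlam).aemeasurable (by fun_prop)

lemma integral_eq_half_smul_add {E : Type*} [NormedAddCommGroup E] [NormedSpace ℝ E] {f : ℝ → E}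
    (hf : IntervalIntegrable f volume 0 1) :
    ∫ x in (0 : ℝ)..1, f x =
      (1 / 2 : ℝ) • ((∫ u in (0 : ℝ)..1, f (u / 2)) + ∫ u in (0 : ℝ)..1, f (u / 2 + 1 / 2)) := by
  have hhalf : (1 / 2 : ℝ) ∈ Set.uIcc 0 1 := by norm_num [Set.uIcc_of_le]
  rw [intervalIntegral.integral_comp_div _ two_ne_zero,
    intervalIntegral.integral_comp_div_add _ two_ne_zero, ← smul_add, smul_smul, zero_div,
    zero_add, add_halves, intervalIntegral.integral_add_adjacent_intervals
      (hf.mono_set (Set.uIcc_subset_uIcc_left hhalf))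
      (hf.mono_set (Set.uIcc_subset_uIcc_right hhalf)), one_div_mul_cancel two_ne_zero, one_smul]

theorem charFun_bernoulliConv (hlam : |lam| < 1) (ξ : ℝ) :
    charFun (bernoulliConv lam) ξ = cos ξ * charFun (bernoulliConv lam) (lam * ξ) := by
  have hint : IntervalIntegrable
      (fun x ↦ Complex.exp (ξ * binarySignSeries lam x * Complex.I)) volume 0 1 := by
    have := measurable_binarySignSeries hlam
    refine intervalIntegrable_const (c := (1 : ℝ)) |>.mono_fun
      (Measurable.aestronglyMeasurable (by fun_prop)) (.of_forall fun x ↦ ?_)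
    dsimp only
    rw [← Complex.ofReal_mul, Complex.norm_exp_ofReal_mul_I, norm_one]
  have hbranch (r : ℝ → ℝ) (σ : ℝ) (h0 : ∀ u ∈ Set.Ico (0 : ℝ) 1, binarySign 0 (r u) = σ)
      (hsucc : ∀ n u, binarySign (n + 1) (r u) = binarySign n u) :
      ∫ u in (0 : ℝ)..1, Complex.exp (ξ * binarySignSeries lam (r u) * Complex.I) =
        Complex.exp (σ * ξ * Complex.I) * charFun (bernoulliConv lam) (lam * ξ) := by
    rw [charFun_bernoulliConv_eq_integral hlam, ← intervalIntegral.integral_const_mul]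
    refine intervalIntegral.integral_congr_uIoo fun u hu ↦ ?_
    rw [Set.uIoo_of_le zero_le_one] at hu
    rw [binarySignSeries_eq_add_mul hlam (hsucc · u), h0 u ⟨hu.1.le, hu.2⟩, ← Complex.exp_add]
    push_cast
    ring_nf
  rw [charFun_bernoulliConv_eq_integral hlam, integral_eq_half_smul_add hint,
    hbranch (· / 2) (-1) (fun u ↦ binarySign_zero_half) binarySign_succ_half,
    hbranch (· / 2 + 1 / 2) 1 (fun u ↦ binarySign_zero_half_add_half)
      binarySign_succ_half_add_half, Complex.ofReal_cos, Complex.cos, Complex.real_smul]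
  push_cast
  ring_nf

end BernoulliConvolution

section BlockChoice

open Filter

lemma exists_nat_seq_growth {g q : ℝ} (hg : 0 ≤ g) (hgq : g < q) (hq : 1 ≤ q) (m₀ : ℕ) :
    ∃ B > 0, ∃ m : ℕ → ℕ, (∀ i, m₀ ≤ m i) ∧ (∀ i, m i ≤ B * q ^ i) ∧
      ∀ ⦃i j⦄, i < j → g * m i ≤ m j := by
  obtain ⟨B, hB1, hBm₀, hBg⟩ : ∃ B : ℝ, 1 ≤ B ∧ m₀ ≤ B ∧ g ≤ B * (q - g) := by
    have := tendsto_id.atTop_mul_const (sub_pos.2 hgq) |>.eventually_ge_atTop g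
    obtain ⟨B, h⟩ := ((eventually_ge_atTop (1 : ℝ)).and
      ((eventually_ge_atTop (m₀ : ℝ)).and this)).exists
    exact ⟨B, h⟩
  have hpow (i : ℕ) : 1 ≤ q ^ i := one_le_pow₀ hq
  have hBpow (i : ℕ) : B ≤ B * q ^ i := le_mul_of_one_le_right (by linarith) (hpow i)
  have hceil (i : ℕ) : (⌈B * q ^ i⌉₊ : ℝ) ≤ B * q ^ i + 1 :=
    (Nat.ceil_lt_add_one (by linarith [hBpow i])).le
  refine ⟨2 * B, by positivity, fun i ↦ ⌈B * q ^ i⌉₊,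
    fun i ↦ Nat.cast_le.1 ((hBm₀.trans (hBpow i)).trans (Nat.le_ceil _)),
    fun i ↦ by linarith [hceil i, hBpow i], fun i j hij ↦ ?_⟩
  calc g * ⌈B * q ^ i⌉₊ ≤ g * (B * q ^ i + 1) := by gcongr; exact hceil i
    _ ≤ g * (B * q ^ i) + B * (q - g) * q ^ i := by nlinarith [hpow i]
    _ = B * q ^ (i + 1) := by ring
    _ ≤ B * q ^ j := by gcongr; assumption'
    _ ≤ ⌈B * q ^ j⌉₊ := Nat.le_ceil _

lemma exists_pairwiseDisjoint_Ico {κ β g q : ℝ} {p : ℕ → ℝ → Prop} (hκ : 0 < κ) (hβ : 1 ≤ β)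
    (hg : κ ≤ g * (β - 1)) (hgq : g < q) (hq : 1 ≤ q)
    (h : ∀ᶠ m : ℕ in atTop, ∀ t ≥ κ * m, ∃ a : ℕ, t - a ∈ Set.Icc (β * m) (κ * m) ∧ p m (t - a)) :
    ∃ A > 0, ∀ (J : ℕ) (t : ℝ), A * q ^ J ≤ t → ∃ a m : ℕ → ℕ,
      (Finset.range J : Set ℕ).PairwiseDisjoint (fun i ↦ Finset.Ico (a i) (a i + m i)) ∧
        ∀ i ∈ Finset.range J, p (m i) (t - a i) := by
  obtain ⟨m₀, hm₀⟩ := eventually_atTop.1 h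
  have hg0 : 0 < g := by nlinarith
  obtain ⟨B, hB, m, hm₀_le, hm_le, hm_growth⟩ := exists_nat_seq_growth hg0.le hgq hq m₀
  refine ⟨κ * B, by positivity, fun J t ht ↦ ?_⟩
  have hexists (i : ℕ) : ∃ a : ℕ, i < J →
      t - a ∈ Set.Icc (β * m i) (κ * m i) ∧ p (m i) (t - a) := by
    by_cases hi : i < J
    · have hti : κ * m i ≤ t :=
        calc κ * m i ≤ κ * (B * q ^ J) := by gcongr; exact (hm_le i).trans (by gcongr)
          _ ≤ t := by linarith
      exact (hm₀ (m i) (hm₀_le i) t hti).imp fun a ha _ ↦ ha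
    · exact ⟨0, fun hi' ↦ absurd hi' hi⟩
  choose a ha using hexists
  have hdisjoint {i j : ℕ} (hij : i < j) (hj : j < J) :
      Disjoint (Finset.Ico (a j) (a j + m j)) (Finset.Ico (a i) (a i + m i)) := by
    have hi := (ha i (hij.trans hj)).1.2
    have hj := (ha j hj).1.1
    have : κ * m i ≤ (β - 1) * m j :=
      calc κ * m i ≤ g * (β - 1) * m i := by gcongr
        _ = (β - 1) * (g * m i) := by ring
        _ ≤ (β - 1) * m j := mul_le_mul_of_nonneg_left (hm_growth hij) (sub_nonneg.2 hβ)
    have hle : a j + m j ≤ a i := by exact_mod_cast show (a j + m j : ℝ) ≤ a i by linarith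
    exact (Finset.Ico_disjoint_Ico_consecutive _ _ _).mono_right (Finset.Ico_subset_Ico_left hle)
  refine ⟨a, m, fun i hi j hj hne ↦ ?_, fun i hi ↦ (ha i (Finset.mem_range.1 hi)).2⟩
  rw [Finset.mem_coe, Finset.mem_range] at hi hj
  rcases hne.lt_or_gt with hij | hji
  · exact (hdisjoint hij hj).symm
  · exact hdisjoint hji hi

variable {lam κ β δ : ℝ} {P : Polynomial ℤ}

lemma exists_nat_mul_detailSq_rpow_le {ι : Type*} [Fintype ι] [Nonempty ι] (x : ι → ℝ)
    (hlam : lam ∈ Set.Ioo 0 1) {u w t S : ℝ} (hu : 0 ≤ u) (huw : u + 2 ≤ w) (hwt : w ≤ t)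
    (hS : ∀ y ≥ lam ^ (2 * w), ∀ y' ∈ Set.Ioc (0 : ℝ) 1,
      differentialEntropy (gaussianMixture x y') -
        differentialEntropy (gaussianMixture x y) ≤ S) :
    ∃ a : ℕ, t - a ∈ Set.Icc u w ∧
      (w - u - 2) * ((1 - lam ^ 2) * detailSq x (lam ^ (2 * (t - a)))) ≤ 2 * S := by
  have hlamsq : 0 ≤ 1 - lam ^ 2 := sub_nonneg.2 (pow_le_one₀ hlam.1.le hlam.2.le)
  have hshift (a k : ℕ) :
      lam ^ (2 * (t - a)) * (lam⁻¹ ^ 2) ^ k = lam ^ (2 * (t - (a + k : ℕ))) := by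
    rw [← pow_mul, inv_pow, ← rpow_natCast, ← rpow_neg hlam.1.le, ← rpow_add hlam.1]
    push_cast
    ring_nf
  let a := ⌈t - w⌉₊
  let K := ⌊w - u - 1⌋₊
  have ha : t - w ≤ a := Nat.le_ceil _
  have ha' : a < t - w + 1 := Nat.ceil_lt_add_one (by linarith)
  have hK : K ≤ w - u - 1 := Nat.floor_le (by linarith)
  have hK' : w - u - 1 < K + 1 := Nat.lt_floor_add_one _
  have hKpos : 0 < K := Nat.floor_pos.2 (by linarith)
  obtain ⟨k, hk, hdetail⟩ := exists_lt_mul_detailSq_le (rpow_pos_of_pos hlam.1 (2 * (t - a)))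
    (one_lt_pow₀ ((one_lt_inv₀ hlam.1).2 hlam.2) two_ne_zero) x hKpos
  have hlower : lam ^ (2 * (t - a)) ≥ lam ^ (2 * w) :=
    rpow_le_rpow_of_exponent_ge hlam.1 hlam.2.le (by linarith)
  have hupper : lam ^ (2 * (t - a)) * (lam⁻¹ ^ 2) ^ K ∈ Set.Ioc (0 : ℝ) 1 := by
    rw [hshift]
    refine ⟨rpow_pos_of_pos hlam.1 _, rpow_le_one hlam.1.le hlam.2.le ?_⟩
    push_cast
    linarith
  rw [hshift, ← inv_pow, inv_inv] at hdetail
  refine ⟨a + (k + 1), ⟨?_, ?_⟩, ?_⟩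
  · have : (k : ℝ) + 1 ≤ K := mod_cast hk
    push_cast
    linarith
  · push_cast
    linarith
  · calc _ ≤ K * ((1 - lam ^ 2) * detailSq x (lam ^ (2 * (t - (a + (k + 1) : ℕ))))) := by
          refine mul_le_mul_of_nonneg_right (by linarith) (mul_nonneg hlamsq ?_)
          exact detailSq_nonneg (rpow_pos_of_pos hlam.1 _).le x
      _ ≤ 2 * S := hdetail.trans (by gcongr; exact hS _ hlower _ hupper)

lemma eventually_exists_detailSq_digitSum_le (hlam : lam ∈ Set.Ioo 0 1) (hirr : Irreducible P)
    (hroot : Polynomial.aeval lam P = 0) (hpm : IsHeightOneFree lam)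
    (hκ : κ * log lam⁻¹ = log (mahlerMeasure P)) (hβ : β ∈ Set.Ico 0 κ)
    (hδ : 2 * (log (mahlerMeasure P) - log 2) < (1 - lam ^ 2) * (κ - β) * δ) :
    ∀ᶠ m : ℕ in atTop, ∀ t ≥ κ * m, ∃ a : ℕ, t - a ∈ Set.Icc (β * m) (κ * m) ∧
      detailSq (digitSum lam m) (lam ^ (2 * (t - a))) ≤ δ := by
  set L := log (mahlerMeasure P)
  have hlamsq : 0 < 1 - lam ^ 2 := sub_pos.2 (pow_lt_one₀ hlam.1.le hlam.2 two_ne_zero)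
  have hwidth : 0 < κ - β := sub_pos.2 hβ.2
  obtain ⟨η, hη, hgap⟩ : ∃ η > 0,
      (1 - lam ^ 2) * (κ - β) * δ = 2 * (L - log 2) + 4 * η :=
    ⟨((1 - lam ^ 2) * (κ - β) * δ - 2 * (L - log 2)) / 4, by linarith, by ring⟩
  have hcast := tendsto_natCast_atTop_atTop (R := ℝ)
  filter_upwards [eventually_differentialEntropy_digitSum_sub_le hlam hirr hroot hpm hη,
    (hcast.const_mul_atTop hwidth).eventually_gt_atTop 2,
    (hcast.const_mul_atTop hη).eventually_ge_atTop ((1 - lam ^ 2) * δ)] with m hentropy hm hmδ t ht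
  have hscale : lam ^ (2 * (κ * m)) = (mahlerMeasure P ^ (2 * m))⁻¹ := by
    have hM : mahlerMeasure P = exp (κ * log lam⁻¹) := by
      rw [hκ, exp_log (one_pos.trans_le (one_le_mahlerMeasure hirr.ne_zero))]
    rw [rpow_def_of_pos hlam.1, hM, ← exp_nat_mul, ← exp_neg, log_inv]
    push_cast
    ring_nf
  rw [← hscale] at hentropy
  obtain ⟨a, ha, hle⟩ := exists_nat_mul_detailSq_rpow_le (digitSum lam m) hlam
    (mul_nonneg hβ.1 m.cast_nonneg) (by linarith) ht hentropy
  have hbudget : 2 * (m * (L - log 2 + η)) ≤ (κ * m - β * m - 2) * ((1 - lam ^ 2) * δ) :=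
    calc _ ≤ m * (2 * (L - log 2) + 4 * η) - 2 * ((1 - lam ^ 2) * δ) := by linarith
      _ = _ := by rw [← hgap]; ring
  have hwindow : 0 < κ * m - β * m - 2 := by linarith
  exact ⟨a, ha, le_of_mul_le_mul_left (le_of_mul_le_mul_left (hle.trans hbudget) hwindow) hlamsq⟩

/-- A block of length `m` is resolved at scales `lam ^ (2 * u)` with `β * m ≤ u ≤ κ * m`. The
choice `β = (1 + 2 * κ) / 3` of this window maximizes `(κ - β) * (β - 1) ^ 2`. -/
lemma exists_exp_one_mul_mul_sq_lt_one {d e : ℝ} (hd : 0 < d) (he : 0 ≤ e) (hκ : 1 < κ)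
    (h : 27 * exp 1 * e * κ ^ 2 < 2 * d * (κ - 1) ^ 3) :
    ∃ β ∈ Set.Ico 1 κ, ∃ δ g q : ℝ, 0 ≤ δ ∧ g < q ∧ 1 < q ∧ exp 1 * δ * q ^ 2 < 1 ∧
      κ ≤ g * (β - 1) ∧ 2 * e < d * (κ - β) * δ := by
  have hκ1 : 0 < κ - 1 := sub_pos.2 hκ
  set δ := 6 * e / (d * (κ - 1)) with hδ
  set g := 3 * κ / (2 * (κ - 1)) with hg
  have hδ0 : 0 ≤ δ := by positivity
  have hg1 : 1 ≤ g := (one_le_div (by positivity)).2 (by linarith)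
  have hδg : exp 1 * δ * g ^ 2 < 1 := by
    have : exp 1 * δ * g ^ 2 = 27 * exp 1 * e * κ ^ 2 / (2 * d * (κ - 1) ^ 3) := by
      rw [hδ, hg]
      field_simp
      ring
    rwa [this, div_lt_one (by positivity)]
  have hcont : Tendsto (fun r ↦ exp 1 * (δ + r) * (g + r) ^ 2) (nhds 0)
      (nhds (exp 1 * (δ + 0) * (g + 0) ^ 2)) := Continuous.tendsto (by fun_prop) 0
  rw [add_zero, add_zero] at hcont
  obtain ⟨r, hr, hr0⟩ : ∃ r : ℝ, exp 1 * (δ + r) * (g + r) ^ 2 < 1 ∧ 0 < r :=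
    (((hcont.eventually_lt_const hδg).filter_mono nhdsWithin_le_nhds).and
      (self_mem_nhdsWithin (s := Set.Ioi 0))).exists
  refine ⟨(1 + 2 * κ) / 3, ⟨by linarith, by linarith⟩, δ + r, g, g + r, by linarith,
    by linarith, by linarith, hr, ?_, ?_⟩
  · have : g * ((1 + 2 * κ) / 3 - 1) = κ := by
      rw [hg]
      field_simp
      ring
    exact this.ge
  · have : d * (κ - (1 + 2 * κ) / 3) * δ = 2 * e := by
      rw [hδ]
      field_simp
      ring
    have : 0 < d * (κ - (1 + 2 * κ) / 3) * r := mul_pos (mul_pos hd (by linarith)) hr0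
    linarith

theorem exists_pairwiseDisjoint_detailSq_digitSum_le (hlam : lam ∈ Set.Ioo 0 1)
    (hirr : Irreducible P) (hroot : Polynomial.aeval lam P = 0) (hpm : IsHeightOneFree lam)
    (hM : 27 * exp 1 * log lam⁻¹ * ((log (mahlerMeasure P) - log 2) * log (mahlerMeasure P) ^ 2) <
      2 * (1 - lam ^ 2) * (log (mahlerMeasure P) - log lam⁻¹) ^ 3) :
    ∃ δ q A : ℝ, 0 ≤ δ ∧ 1 < q ∧ 0 < A ∧ exp 1 * δ * q ^ 2 < 1 ∧
      ∀ (J : ℕ) (t : ℝ), A * q ^ J ≤ t → ∃ a m : ℕ → ℕ,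
        (Finset.range J : Set ℕ).PairwiseDisjoint (fun i ↦ Finset.Ico (a i) (a i + m i)) ∧
          ∀ i ∈ Finset.range J, detailSq (digitSum lam (m i)) (lam ^ (2 * (t - a i))) ≤ δ := by
  have hL2 := log_two_le_log_mahlerMeasure hlam hirr hroot hpm
  set L := log (mahlerMeasure P)
  set ℓ := log lam⁻¹
  have hℓ : 0 < ℓ := log_pos ((one_lt_inv₀ hlam.1).2 hlam.2)
  have hexcess : 0 ≤ L - log 2 := sub_nonneg.2 hL2
  have hlamsq : 0 < 1 - lam ^ 2 := sub_pos.2 (pow_lt_one₀ hlam.1.le hlam.2 two_ne_zero)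
  have hLℓ : 0 < L - ℓ := by
    have hcube : 0 < (L - ℓ) ^ 3 :=
      pos_of_mul_pos_right (lt_of_le_of_lt (by positivity) hM) (by positivity)
    exact (Odd.pow_pos_iff (by decide)).1 hcube
  have hM' : 27 * exp 1 * (L - log 2) * (L / ℓ) ^ 2 < 2 * (1 - lam ^ 2) * (L / ℓ - 1) ^ 3 := by
    have hsub : L / ℓ - 1 = (L - ℓ) / ℓ := by rw [sub_div, div_self hℓ.ne']
    rw [hsub, div_pow, div_pow, ← mul_lt_mul_iff_left₀ (pow_pos hℓ 3)]
    calc _ = 27 * exp 1 * ℓ * ((L - log 2) * L ^ 2) := by field_simp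
      _ < _ := hM
      _ = _ := by field_simp
  obtain ⟨β, hβ, δ, g, q, hδ, hgq, hq, hδq, hg, hwindow⟩ :=
    exists_exp_one_mul_mul_sq_lt_one hlamsq hexcess ((one_lt_div hℓ).2 (sub_pos.1 hLℓ)) hM'
  obtain ⟨A, hA, hblocks⟩ := exists_pairwiseDisjoint_Ico
    (p := fun m u ↦ detailSq (digitSum lam m) (lam ^ (2 * u)) ≤ δ) (by linarith [hβ.1, hβ.2])
    hβ.1 hg hgq hq.le (eventually_exists_detailSq_digitSum_le hlam hirr hroot hpm
      (div_mul_cancel₀ L hℓ.ne') ⟨by linarith [hβ.1], hβ.2⟩ hwindow)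
  exact ⟨δ, q, A, hδ, hq, hA, hδq, hblocks⟩

end BlockChoice

section HeatPairing

open Filter

/-- The pairing at `0` of the trigonometric sum with coefficients `c` against the `k`-th derivative
in the variance `y` of the heat regularization `exp (-y ξ ^ 2 / 2) * φ ξ` of the Fourier transform
`φ`. -/
noncomputable def heatPairing (φ : ℝ → ℂ) (c : ℝ →₀ ℂ) (k : ℕ) (y : ℝ) : ℂ :=
  expSum ((fun ξ : ℝ ↦ (-(ξ : ℂ) ^ 2 / 2) ^ k * (exp (-(y * ξ ^ 2 / 2)) * φ ξ)) • c) 0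

variable {φ : ℝ → ℂ} {c : ℝ →₀ ℂ}

lemma hasDerivAt_heatPairing (φ : ℝ → ℂ) (c : ℝ →₀ ℂ) (k : ℕ) (y : ℝ) :
    HasDerivAt (heatPairing φ c k) (heatPairing φ c (k + 1) y) y := by
  have hexp (ξ : ℝ) : HasDerivAt (fun y : ℝ ↦ (exp (-(y * ξ ^ 2 / 2)) : ℂ))
      (-(ξ : ℂ) ^ 2 / 2 * exp (-(y * ξ ^ 2 / 2))) y := by
    convert ((hasDerivAt_mul_const (ξ ^ 2)).div_const 2).fun_neg.exp.ofReal_comp using 1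
    push_cast
    ring
  unfold heatPairing
  simp only [expSum_smul, Finsupp.sum]
  refine (HasDerivAt.fun_sum fun ξ _ ↦ ((((hexp ξ).mul_const (φ ξ)).const_mul
    ((-(ξ : ℂ) ^ 2 / 2) ^ k)).mul_const (c ξ)).mul_const _).congr_deriv ?_
  exact Finset.sum_congr rfl fun ξ _ ↦ by ring

lemma tendsto_heatPairing_zero (φ : ℝ → ℂ) (c : ℝ →₀ ℂ) :
    Tendsto (heatPairing φ c 0) (nhdsWithin 0 (Set.Ioi 0)) (nhds (expSum (φ • c) 0)) := by
  convert ((hasDerivAt_heatPairing φ c 0 0).continuousAt.tendsto).mono_left nhdsWithin_le_nhds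
  simp [heatPairing]

lemma norm_heatPairing_zero_le (hφ : IsFourierMultiplier φ 1) (hc : ∀ x, ‖expSum c x‖ ≤ 1) {y : ℝ}
    (hy : 0 ≤ y) : ‖heatPairing φ c 0 y‖ ≤ 1 := by
  have hgauss : charFun (gaussianReal 0 y.toNNReal) = fun ξ : ℝ ↦ (exp (-(y * ξ ^ 2 / 2)) : ℂ) := by
    ext ξ
    simp [charFun_gaussianReal, hy]
  have hheat := hgauss ▸ isFourierMultiplier_charFun (gaussianReal 0 y.toNNReal)
  have hbound := hheat.mul hφ c 1 hc 0
  simp only [heatPairing, pow_zero, one_mul]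
  rwa [one_mul, one_mul] at hbound

variable {lam δ y : ℝ} {k : ℕ}

lemma norm_heatPairing_le_of_pairwiseDisjoint (hlam : 0 < lam) (hφ : IsFourierMultiplier φ 1)
    (hself : ∀ ξ, φ ξ = cos ξ * φ (lam * ξ)) (hc : ∀ x, ‖expSum c x‖ ≤ 1) (hy : 0 < y)
    (hk : 0 < k) {a m : ℕ → ℕ}
    (hdisj : (Finset.range (2 * k) : Set ℕ).PairwiseDisjoint fun i ↦ Finset.Ico (a i) (a i + m i))
    (hδ : 0 ≤ δ) (hδm : ∀ i ∈ Finset.range (2 * k),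
      detailSq (digitSum lam (m i)) (y / (2 * k) / lam ^ (2 * a i)) ≤ δ) :
    ‖heatPairing φ c k y‖ ≤ (k * δ / y) ^ k := by
  have hmul := isFourierMultiplier_pow_mul_exp_mul hlam hφ hself hdisj (by positivity) hδm
  rw [Finset.card_range] at hmul
  have hbound := (hmul.const_mul ((-1 / 2) ^ k)) c 1 hc 0
  have hvariance : ((2 * k : ℕ) : ℝ) * (y / (2 * k)) = y := by
    push_cast
    field_simp
  have hnorm : ‖((-1 / 2 : ℂ) ^ k)‖ * √(δ / (y / (2 * k))) ^ (2 * k) * 1 = (k * δ / y) ^ k := by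
    rw [mul_one, norm_pow, pow_mul, sq_sqrt (by positivity), ← mul_pow]
    congr 1
    norm_num
    field_simp
  have hpow (ξ : ℝ) : (-(ξ : ℂ) ^ 2 / 2) ^ k = (-1 / 2) ^ k * ξ ^ (2 * k) := by
    rw [pow_mul, ← mul_pow]
    ring
  rw [hnorm, hvariance] at hbound
  simp only [heatPairing, hpow, mul_assoc]
  simpa only [mul_assoc] using hbound

lemma norm_heatPairing_le (hlam : 0 < lam) (hφ : IsFourierMultiplier φ 1)
    (hself : ∀ ξ, φ ξ = cos ξ * φ (lam * ξ)) (hc : ∀ x, ‖expSum c x‖ ≤ 1) (hy : 0 < y) (k : ℕ) :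
    ‖heatPairing φ c k y‖ ≤ (k / y) ^ k := by
  rcases k.eq_zero_or_pos with rfl | hk
  · simpa using norm_heatPairing_zero_le hφ hc hy.le
  · have hdisj : (Finset.range (2 * k) : Set ℕ).PairwiseDisjoint
        fun _ ↦ Finset.Ico 0 (0 + 0) := fun _ _ _ _ _ ↦ Finset.disjoint_empty_left _
    simpa using norm_heatPairing_le_of_pairwiseDisjoint hlam hφ hself hc hy hk hdisj zero_le_one
      fun i _ ↦ detailSq_le_one (by positivity) _

theorem absolutelyContinuous_of_pairwiseDisjoint_detailSq_digitSum_le {μ : Measure ℝ}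
    [IsProbabilityMeasure μ] {q A : ℝ} (hlam : lam ∈ Set.Ioo 0 1)
    (hself : ∀ ξ, charFun μ ξ = cos ξ * charFun μ (lam * ξ)) (hδ : 0 ≤ δ) (hq : 1 < q)
    (hA : 0 < A) (hδq : exp 1 * δ * q ^ 2 < 1)
    (hblocks : ∀ (J : ℕ) (t : ℝ), A * q ^ J ≤ t → ∃ a m : ℕ → ℕ,
      (Finset.range J : Set ℕ).PairwiseDisjoint (fun i ↦ Finset.Ico (a i) (a i + m i)) ∧
        ∀ i ∈ Finset.range J, detailSq (digitSum lam (m i)) (lam ^ (2 * (t - a i))) ≤ δ) :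
    μ ≪ volume := by
  have hφ := isFourierMultiplier_charFun μ
  have hN : 0 < 2 * A * log lam⁻¹ :=
    mul_pos (by positivity) (log_pos ((one_lt_inv₀ hlam.1).2 hlam.2))
  refine absolutelyContinuous_of_forall_exists_gaussian fun ε hε ↦ ?_
  obtain ⟨y, hy, hclose⟩ := exists_forall_norm_sub_le (E := ℂ) hδ hN
    (one_lt_pow₀ hq two_ne_zero) hδq hε
  refine ⟨y, hy, fun c hc ↦ ?_⟩
  have hsmall (k : ℕ) (hk : 0 < k) (y : ℝ)
      (hy : y ∈ Set.Ioc 0 (exp (-(2 * A * log lam⁻¹ * (q ^ 2) ^ k)))) :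
      ‖heatPairing (charFun μ) c k y‖ ≤ (k * δ / y) ^ k := by
    have hs : 0 < y / (2 * k) := div_pos hy.1 (by positivity)
    have hscale : A * q ^ (2 * k) ≤ logb lam (y / (2 * k)) / 2 := by
      rw [le_div_iff₀ two_pos, le_logb_iff_rpow_le_of_base_lt_one hlam.1 hlam.2 hs,
        rpow_def_of_pos hlam.1]
      calc y / (2 * k) ≤ y := div_le_self hy.1.le (by norm_cast; omega)
        _ ≤ _ := hy.2
        _ = _ := by rw [log_inv]; ring_nf
    obtain ⟨a, m, hdisj, hdetail⟩ := hblocks (2 * k) _ hscale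
    refine norm_heatPairing_le_of_pairwiseDisjoint hlam.1 hφ hself hc hy.1 hk hdisj hδ
      fun i hi ↦ ?_
    convert hdetail i hi using 2
    rw [mul_sub, mul_div_cancel₀ _ two_ne_zero, rpow_sub hlam.1, rpow_logb hlam.1 hlam.2.ne hs]
    norm_cast
  simpa [heatPairing] using hclose (heatPairing (charFun μ) c)
    (fun k y _ ↦ hasDerivAt_heatPairing _ c k y)
    (fun k y hy ↦ norm_heatPairing_le hlam.1 hφ hself hc hy k) hsmall _
    (tendsto_heatPairing_zero _ c)

end HeatPairing

lemma mul_log_inv_mul_lt {lam X Y : ℝ} (hlam : lam ∈ Set.Ioo 0 1) (hX : 0 ≤ X)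
    (h : X < 1 / 27 * Y * lam ^ 4) :
    27 * exp 1 * log lam⁻¹ * X < 2 * (1 - lam ^ 2) * Y := by
  have hlamsq : 0 < 1 - lam ^ 2 := sub_pos.2 (pow_lt_one₀ hlam.1.le hlam.2 two_ne_zero)
  have hlog0 : 0 < log lam⁻¹ := log_pos ((one_lt_inv₀ hlam.1).2 hlam.2)
  have hY : 0 < Y := pos_of_mul_pos_left (by linarith) (pow_pos hlam.1 4).le
  have hlog : 2 * log lam⁻¹ * lam ^ 2 ≤ 1 - lam ^ 2 := by
    have hle := log_le_sub_one_of_pos (pow_pos (inv_pos.2 hlam.1) 2)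
    rw [log_pow] at hle
    have hinv : (lam⁻¹ ^ 2 - 1) * lam ^ 2 = 1 - lam ^ 2 := by
      have := hlam.1.ne'
      field_simp
    rw [← hinv]
    exact mul_le_mul_of_nonneg_right (mod_cast hle) (sq_nonneg lam)
  calc 27 * exp 1 * log lam⁻¹ * X < 27 * exp 1 * log lam⁻¹ * (1 / 27 * Y * lam ^ 4) := by gcongr
    _ = exp 1 / 2 * Y * lam ^ 2 * (2 * log lam⁻¹ * lam ^ 2) := by ring
    _ ≤ 4 / 2 * Y * 1 * (1 - lam ^ 2) := by
      gcongr
      · linarith [exp_one_lt_three]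
      · exact pow_le_one₀ hlam.1.le hlam.2.le
    _ = 2 * (1 - lam ^ 2) * Y := by ring

theorem statement0_general {lam : ℝ} (hlam : lam ∈ Set.Ioo 0 1) {P : Polynomial ℤ}
    (hirr : Irreducible P) (hroot : Polynomial.aeval lam P = 0)
    (hpm : IsHeightOneFree lam)
    (hM : 27 * exp 1 * log lam⁻¹ * ((log (mahlerMeasure P) - log 2) * log (mahlerMeasure P) ^ 2) <
      2 * (1 - lam ^ 2) * (log (mahlerMeasure P) - log lam⁻¹) ^ 3) :
    bernoulliConv lam ≪ volume := by
  have hlam_abs : |lam| < 1 := abs_lt.2 ⟨by linarith [hlam.1], hlam.2⟩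
  have := isProbabilityMeasure_bernoulliConv hlam_abs
  obtain ⟨δ, q, A, hδ, hq, hA, hδq, hblocks⟩ :=
    exists_pairwiseDisjoint_detailSq_digitSum_le hlam hirr hroot hpm hM
  exact absolutelyContinuous_of_pairwiseDisjoint_detailSq_digitSum_le hlam
    (charFun_bernoulliConv hlam_abs) hδ hq hA hδq hblocks

theorem statement0 (lam : ℝ) (hlam : lam ∈ Set.Ioo (1 / 2 : ℝ) 1)
    (P : Polynomial ℤ) (hP : P ≠ 0) (hirr : Irreducible P)
    (hroot : Polynomial.aeval lam P = 0)
    (hpm : ∀ Q : Polynomial ℤ, Q ≠ 0 → (∀ n, Q.coeff n = -1 ∨ Q.coeff n = 0 ∨ Q.coeff n = 1) →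
      Polynomial.aeval lam Q ≠ 0)
    (hineq : (Real.log (mahlerMeasure P) - Real.log 2) * Real.log (mahlerMeasure P) ^ 2 <
      1 / 27 * (Real.log (mahlerMeasure P) - Real.log lam⁻¹) ^ 3 * lam ^ 4) :
    bernoulliConv lam ≪ volume := by
  have hlam' : lam ∈ Set.Ioo 0 1 := ⟨one_half_pos.trans hlam.1, hlam.2⟩
  have hlog := sub_nonneg.2 (log_two_le_log_mahlerMeasure hlam' hirr hroot hpm)
  exact statement0_general hlam' hirr hroot hpm
    (mul_log_inv_mul_lt hlam' (mul_nonneg hlog (sq_nonneg _)) hineq)
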